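/- arXiv:2412.04961 — 10 statements merged into one kernel-verified Lean document; each statement's English description precedes it below -/
import Mathlib

section
/- Let (E^•, I_•, ∫) be a Cheeger–Simons model over 𝕂 and k ≥ 0. For every f ∈ Diff^k(CS) there is a unique ω ∈ E^{k+1} such that f(∂β) ≡ ∫_β ω (mod ℤ) for all β ∈ I_{k+1}; moreover this ω lies in E^{k+1}_0, and the resulting map δ₁ : Diff^k(CS) → E^{k+1}_0, f ↦ ω, is a surjective group homomorphism. -/
open AddSubgroup

noncomputable section

/-- Cycles of an `ℕ`-indexed chain complex, with the convention `Z_0 = I_0`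
(i.e. `∂ : I_0 → I_{-1} = 0`). -/
def Zc {I : ℕ → Type*} [∀ i, AddCommGroup (I i)] (bd : ∀ k, I (k+1) →+ I k) :
    ∀ k, AddSubgroup (I k)
  | 0 => ⊤
  | n+1 => (bd n).ker

theorem mem_Zc_bd {I : ℕ → Type*} [∀ i, AddCommGroup (I i)] (bd : ∀ k, I (k+1) →+ I k)
    (hbd : ∀ k x, bd k (bd (k+1) x) = 0) :
    ∀ (k : ℕ) (β : I (k+1)), bd k β ∈ Zc bd k
  | 0, _ => mem_top _
  | n+1, β => by simpa [Zc, AddMonoidHom.mem_ker] using hbd n β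

/-- Coboundaries of an `ℕ`-indexed cochain complex, with the convention
`B^0 = 0`. -/
def Bc {E : ℕ → Type*} [∀ i, AddCommGroup (E i)] (d : ∀ k, E k →+ E (k+1)) :
    ∀ k, AddSubgroup (E k)
  | 0 => ⊥
  | n+1 => (d n).range

/-- Cohomology of an `ℕ`-indexed cochain complex. -/
abbrev Hc {E : ℕ → Type*} [∀ i, AddCommGroup (E i)] (d : ∀ k, E k →+ E (k+1)) (k : ℕ) :=
  ↥(d k).ker ⧸ ((Bc d k).addSubgroupOf (d k).ker)

/-- The class of a cocycle in cohomology. -/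
def Hmk {E : ℕ → Type*} [∀ i, AddCommGroup (E i)] (d : ∀ k, E k →+ E (k+1)) (k : ℕ) :
    ↥(d k).ker →+ Hc d k := QuotientAddGroup.mk' _

/-- The codifferential on `Hom(I_•, A)` induced by the boundary map of `I_•`. -/
def codiff {I : ℕ → Type*} [∀ i, AddCommGroup (I i)] (bd : ∀ k, I (k+1) →+ I k)
    (A : Type*) [AddCommGroup A] (k : ℕ) : (I k →+ A) →+ (I (k+1) →+ A) :=
  AddMonoidHom.mk' (fun h => h.comp (bd k)) (fun h g => by ext x; simp)

/-- `ℤ` regarded as an additive subgroup of `𝕂`. -/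
def intSub (𝕂 : Type*) [Field 𝕂] : AddSubgroup 𝕂 := zmultiples (1 : 𝕂)

/-- The group `𝕂/ℤ`. -/
abbrev KmodZ (𝕂 : Type*) [Field 𝕂] := 𝕂 ⧸ intSub 𝕂

/-- The quotient map `q : 𝕂 → 𝕂/ℤ`. -/
def qZ (𝕂 : Type*) [Field 𝕂] : 𝕂 →+ KmodZ 𝕂 := QuotientAddGroup.mk' _

/-- The inclusion `Φ : Hom(I_k, ℤ) → Hom(I_k, 𝕂)`. -/
def PhiMap {I : ℕ → Type*} [∀ i, AddCommGroup (I i)] (𝕂 : Type*) [Field 𝕂] (k : ℕ) :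
    (I k →+ ℤ) →+ (I k →+ 𝕂) :=
  AddMonoidHom.mk' (fun h => (Int.castAddHom 𝕂).comp h) (fun a b => by ext x; simp)

/-- The differential character group `Diff^k` of a Cheeger–Simons model. -/
def DiffChar {𝕂 : Type*} [Field 𝕂] {I E : ℕ → Type*}
    [∀ i, AddCommGroup (I i)] [∀ i, AddCommGroup (E i)]
    (bd : ∀ k, I (k+1) →+ I k) (hbd : ∀ k x, bd k (bd (k+1) x) = 0)
    (pair : ∀ k, E k →+ (I k →+ 𝕂)) (k : ℕ) :
    AddSubgroup ((Zc bd k) →+ KmodZ 𝕂) where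
  carrier := {f | ∃ ω : E (k+1), ∀ β : I (k+1),
      f ⟨bd k β, mem_Zc_bd bd hbd k β⟩ = qZ 𝕂 (pair (k+1) ω β)}
  add_mem' := by
    rintro f g ⟨ω, hω⟩ ⟨ω', hω'⟩
    exact ⟨ω + ω', fun β => by
      simp [AddMonoidHom.add_apply, hω β, hω' β]⟩
  zero_mem' := ⟨0, fun β => by simp [qZ]⟩
  neg_mem' := by
    rintro f ⟨ω, hω⟩
    exact ⟨-ω, fun β => by simp [AddMonoidHom.neg_apply, hω β]⟩

/-- The subgroup `E^k_0` of closed elements of `E^k` with integral periods. -/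
def Ezero {𝕂 : Type*} [Field 𝕂] {I E : ℕ → Type*}
    [∀ i, AddCommGroup (I i)] [∀ i, AddCommGroup (E i)]
    (bd : ∀ k, I (k+1) →+ I k) (d : ∀ k, E k →+ E (k+1))
    (pair : ∀ k, E k →+ (I k →+ 𝕂)) (k : ℕ) : AddSubgroup (E k) where
  carrier := {ω | d k ω = 0 ∧ ∀ α ∈ Zc bd k, pair k ω α ∈ intSub 𝕂}
  add_mem' := by
    rintro ω ω' ⟨h1, h2⟩ ⟨h1', h2'⟩
    refine ⟨by simp [h1, h1'], fun α hα => ?_⟩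
    simpa [AddMonoidHom.add_apply] using add_mem (h2 α hα) (h2' α hα)
  zero_mem' := ⟨by simp, fun α _ => by simp [zero_mem]⟩
  neg_mem' := by
    rintro ω ⟨h1, h2⟩
    exact ⟨by simp [h1], fun α hα => by
      simpa [AddMonoidHom.neg_apply] using neg_mem (h2 α hα)⟩


/-- For every differential character `f ∈ Diff^k(𝒞𝒮)` there is a unique
`ω ∈ E^{k+1}` with `f (∂β) ≡ ∫_β ω (mod ℤ)` for all `β ∈ I_{k+1}`; this `ω` lies in
`E^{k+1}_0`, and the resulting map `δ₁ : Diff^k(𝒞𝒮) → E^{k+1}_0` is a surjective group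
homomorphism. -/
theorem statement1
    {𝕂 : Type*} [Field 𝕂] [CharZero 𝕂]
    (I E : ℕ → Type*)
    [∀ i, AddCommGroup (I i)] [∀ i, Module.Free ℤ (I i)]
    [∀ i, AddCommGroup (E i)] [∀ i, Module 𝕂 (E i)]
    (bd : ∀ k, I (k+1) →+ I k)
    (hbd : ∀ k x, bd k (bd (k+1) x) = 0)
    (d : ∀ k, E k →+ E (k+1))
    (hd : ∀ k x, d (k+1) (d k x) = 0)
    (hdsmul : ∀ (k : ℕ) (c : 𝕂) (e : E k), d k (c • e) = c • d k e)
    (pair : ∀ k, E k →+ (I k →+ 𝕂))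
    (pair_smul : ∀ (k : ℕ) (c : 𝕂) (e : E k) (x : I k), pair k (c • e) x = c * pair k e x)
    (pair_injE : ∀ k, Function.Injective (pair k))
    (pair_injI : ∀ (k : ℕ) (x y : I k), (∀ e : E k, pair k e x = pair k e y) → x = y)
    (int_triv : ∀ (k : ℕ) (e : E k), (∀ β : I k, pair k e β ∈ intSub 𝕂) → e = 0)
    (stokes : ∀ (k : ℕ) (e : E k) (α : I (k+1)), pair k e (bd k α) = pair (k+1) (d k e) α)
    (deRham_inj : ∀ (k : ℕ) (e : E k), d k e = 0 → pair k e ∈ Bc (codiff bd 𝕂) k → e ∈ Bc d k)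
    (deRham_surj : ∀ (k : ℕ) (h : I k →+ 𝕂), codiff bd 𝕂 k h = 0 →
      ∃ e : E k, d k e = 0 ∧ h - pair k e ∈ Bc (codiff bd 𝕂) k)
    (k : ℕ) :
    (∀ f ∈ DiffChar bd hbd pair k, ∃! ω : E (k+1),
        ∀ β : I (k+1), f ⟨bd k β, mem_Zc_bd bd hbd k β⟩ = qZ 𝕂 (pair (k+1) ω β)) ∧
    ∃ δ₁ : ↥(DiffChar bd hbd pair k) →+ E (k+1),
      (∀ (f : ↥(DiffChar bd hbd pair k)) (β : I (k+1)),
          (f : ↥(Zc bd k) →+ KmodZ 𝕂) ⟨bd k β, mem_Zc_bd bd hbd k β⟩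
            = qZ 𝕂 (pair (k+1) (δ₁ f) β)) ∧
      (∀ f, δ₁ f ∈ Ezero bd d pair (k+1)) ∧
      (∀ ω ∈ Ezero bd d pair (k+1), ∃ f, δ₁ f = ω) := by
  have hq : ∀ x : 𝕂, qZ 𝕂 x = 0 ↔ x ∈ intSub 𝕂 := fun x => QuotientAddGroup.eq_zero_iff x
  have huniq : ∀ (f : ↥(Zc bd k) →+ KmodZ 𝕂) (ω ω' : E (k+1)),
      (∀ β : I (k+1), f ⟨bd k β, mem_Zc_bd bd hbd k β⟩ = qZ 𝕂 (pair (k+1) ω β)) →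
      (∀ β : I (k+1), f ⟨bd k β, mem_Zc_bd bd hbd k β⟩ = qZ 𝕂 (pair (k+1) ω' β)) →
      ω = ω' := by
    intro f ω ω' h h'
    rw [← sub_eq_zero]
    apply int_triv (k+1)
    intro β
    rw [← hq, map_sub, AddMonoidHom.sub_apply, map_sub, ← h, ← h', sub_self]
  have hex : ∀ f : ↥(DiffChar bd hbd pair k), ∃ ω : E (k+1), ∀ β : I (k+1),
      (f : ↥(Zc bd k) →+ KmodZ 𝕂) ⟨bd k β, mem_Zc_bd bd hbd k β⟩
        = qZ 𝕂 (pair (k+1) ω β) := fun f => f.2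
  choose δ hδ using hex
  refine ⟨fun f hf => ⟨δ ⟨f, hf⟩, hδ ⟨f, hf⟩, fun ω' h' => huniq f _ _ h' (hδ ⟨f, hf⟩)⟩,
    AddMonoidHom.mk' δ ?_, hδ, ?_, ?_⟩
  · intro f g
    refine huniq _ _ _ (hδ (f + g)) fun β => ?_
    rw [map_add, AddMonoidHom.add_apply, map_add, ← hδ, ← hδ]
    rfl
  · intro f
    have key : ∀ α ∈ Zc bd (k+1), pair (k+1) (δ f) α ∈ intSub 𝕂 := by
      intro α hα
      have hα' : bd k α = 0 := hα
      rw [← hq, ← hδ]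
      have : (⟨bd k α, mem_Zc_bd bd hbd k α⟩ : Zc bd k) = 0 := Subtype.ext hα'
      rw [this, map_zero]
    refine ⟨?_, key⟩
    apply int_triv (k+1+1)
    intro β
    change pair (k+1+1) (d (k+1) (δ f)) β ∈ _
    rw [← stokes]
    exact key _ (mem_Zc_bd bd hbd (k+1) β)
  · rintro ω ⟨-, hω⟩
    let b : I (k+1) →+ Zc bd k := (bd k).codRestrict (Zc bd k) (mem_Zc_bd bd hbd k)
    let g : I (k+1) →+ KmodZ 𝕂 := (qZ 𝕂).comp (pair (k+1) ω)
    have hker : b.ker ≤ g.ker := by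
      intro α hα
      have hα' : bd k α = 0 := congrArg Subtype.val (hα : b α = 0)
      exact (hq _).2 (hω α hα')
    let φ : I (k+1) ⧸ b.ker →+ KmodZ 𝕂 := QuotientAddGroup.lift b.ker g hker
    letI : DivisibleBy (KmodZ 𝕂) ℤ :=
      Function.Surjective.divisibleBy (A := 𝕂) (α := ℤ) (QuotientAddGroup.mk : 𝕂 → KmodZ 𝕂)
        QuotientAddGroup.mk_surjective fun _ _ => rfl
    obtain ⟨F, hF⟩ := (Module.Baer.of_divisible (KmodZ 𝕂)).extension_property_addMonoidHom
      (QuotientAddGroup.kerLift b) (QuotientAddGroup.kerLift_injective b) φ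
    have hF' : ∀ β, F ⟨bd k β, mem_Zc_bd bd hbd k β⟩ = qZ 𝕂 (pair (k+1) ω β) := fun β =>
      DFunLike.congr_fun hF (QuotientAddGroup.mk β)
    exact ⟨⟨F, ω, hF'⟩, huniq F _ _ (hδ ⟨F, ω, hF'⟩) hF'⟩

end
end

section
/- Let (E^•, I_•, ∫) be a Cheeger–Simons model over 𝕂 and k ≥ 0. For f ∈ Diff^k(CS), choose any T ∈ F^k = Hom(I_k, 𝕂) with (q∘T)|_{Z_k(I_•)} = f (such T exists since 𝕂/ℤ is divisible and I_k is free). Then δT = ω̃ − c for a unique ω ∈ E^{k+1} and a unique c ∈ I^{k+1} = Hom(I_{k+1}, ℤ), the cochain c satisfies δc = 0, the cohomology class [c] ∈ H^{k+1}(I^•) is independent of the choice of T, and the resulting map δ₂ : Diff^k(CS) → H^{k+1}(I^•), f ↦ [c], is a surjective group homomorphism. -/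
open AddSubgroup

noncomputable section

theorem exists_retr {I : ℕ → Type*} [∀ i, AddCommGroup (I i)] [∀ i, Module.Free ℤ (I i)]
    (bd : ∀ k, I (k+1) →+ I k) :
    ∀ k, ∃ r : I k →+ I k, (∀ x, r x ∈ Zc bd k) ∧ ∀ x ∈ Zc bd k, r x = x
  | 0 => ⟨AddMonoidHom.id _, fun _ => mem_top _, fun _ _ => rfl⟩
  | n+1 => by
    let b := Module.Free.chooseBasis ℤ (I (n+1))
    let j : I (n+1) →+ (Module.Free.ChooseBasisIndex ℤ (I (n+1)) → ℚ) :=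
      AddMonoidHom.mk' (fun x i => ((b.repr x i : ℤ) : ℚ)) fun x y => by
        funext i; simp
    have hj : Function.Injective j := fun x y hxy => by
      apply b.repr.injective
      ext i
      have : ((b.repr x i : ℤ) : ℚ) = ((b.repr y i : ℤ) : ℚ) := congrFun hxy i
      exact_mod_cast this
    let K : AddSubgroup (Module.Free.ChooseBasisIndex ℤ (I (n+1)) → ℚ) := (bd n).ker.map j
    let p := QuotientAddGroup.mk' K
    have hp : Function.Surjective p := QuotientAddGroup.mk'_surjective K
    let _ : DivisibleBy ((Module.Free.ChooseBasisIndex ℤ (I (n+1)) → ℚ) ⧸ K) ℤ :=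
      Function.Surjective.divisibleBy p hp (fun a m => map_zsmul p m a)
    have hker : (bd n).ker ≤ (p.comp j).ker := fun x hx =>
      (QuotientAddGroup.eq_zero_iff (j x)).2 ⟨x, hx, rfl⟩
    obtain ⟨g, hg⟩ := (Module.Baer.of_divisible
      ((Module.Free.ChooseBasisIndex ℤ (I (n+1)) → ℚ) ⧸ K)).extension_property_addMonoidHom
      (QuotientAddGroup.kerLift (bd n)) (QuotientAddGroup.kerLift_injective (bd n))
      (QuotientAddGroup.lift (bd n).ker (p.comp j) hker)
    have hg' : ∀ x, g (bd n x) = p (j x) := fun x =>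
      DFunLike.congr_fun hg (QuotientAddGroup.mk x)
    obtain ⟨G, hG⟩ := Module.projective_lifting_property p.toIntLinearMap g.toIntLinearMap hp
    have hG' : ∀ x, p (G x) = g x := fun x => LinearMap.congr_fun hG x
    have hr : ∀ x, ∃ y ∈ (bd n).ker, j y = j x - G (bd n x) := fun x => by
      have : p (j x - G (bd n x)) = 0 := by rw [map_sub, hG', hg', sub_self]
      exact (QuotientAddGroup.eq_zero_iff _).1 this
    choose r hr1 hr2 using hr
    refine ⟨AddMonoidHom.mk' r fun x y => hj ?_, hr1, fun x hx => hj ?_⟩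
    · rw [map_add, hr2, hr2, hr2, map_add, map_add, map_add]; abel
    · have hx' : bd n x = 0 := hx
      show j (r x) = j x
      rw [hr2, hx', map_zero, sub_zero]

theorem exists_int {𝕂 : Type*} [Field 𝕂] [CharZero 𝕂] {I : ℕ → Type*}
    [∀ i, AddCommGroup (I i)] (k : ℕ) (h : I k →+ 𝕂) (hh : ∀ x, h x ∈ intSub 𝕂) :
    ∃ c : I k →+ ℤ, PhiMap 𝕂 k c = h := by
  have h1 : ∀ x, ∃ n : ℤ, (n : 𝕂) = h x := fun x => by
    obtain ⟨n, hn⟩ := mem_zmultiples_iff.1 (hh x)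
    exact ⟨n, by simpa using hn⟩
  choose c hc using h1
  refine ⟨AddMonoidHom.mk' c fun a b => ?_, ?_⟩
  · have : ((c (a + b) : ℤ) : 𝕂) = ((c a + c b : ℤ) : 𝕂) := by
      push_cast; rw [hc, hc, hc, map_add]
    exact_mod_cast this
  · ext x; exact hc x

theorem PhiMap_app {𝕂 : Type*} [Field 𝕂] {I : ℕ → Type*}
    [∀ i, AddCommGroup (I i)] (k : ℕ) (c : I k →+ ℤ) (x : I k) :
    PhiMap 𝕂 k c x = (c x : 𝕂) := rfl

theorem codiff_app {I : ℕ → Type*} [∀ i, AddCommGroup (I i)] (bd : ∀ k, I (k+1) →+ I k)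
    (A : Type*) [AddCommGroup A] (k : ℕ) (h : I k →+ A) (x : I (k+1)) :
    codiff bd A k h x = h (bd k x) := rfl

theorem int_mem {𝕂 : Type*} [Field 𝕂] (n : ℤ) : (n : 𝕂) ∈ intSub 𝕂 :=
  mem_zmultiples_iff.2 ⟨n, by simp⟩

theorem qZ_zero {𝕂 : Type*} [Field 𝕂] (a : 𝕂) : qZ 𝕂 a = 0 ↔ a ∈ intSub 𝕂 :=
  QuotientAddGroup.eq_zero_iff a

theorem key_lemma {𝕂 : Type*} [Field 𝕂] [CharZero 𝕂] {I E : ℕ → Type*}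
    [∀ i, AddCommGroup (I i)] [∀ i, Module.Free ℤ (I i)] [∀ i, AddCommGroup (E i)]
    (bd : ∀ k, I (k+1) →+ I k) (hbd : ∀ k x, bd k (bd (k+1) x) = 0)
    (pair : ∀ k, E k →+ (I k →+ 𝕂))
    (int_triv : ∀ (k : ℕ) (e : E k), (∀ β : I k, pair k e β ∈ intSub 𝕂) → e = 0)
    (k : ℕ) (T : I k →+ 𝕂) (ω : E (k+1)) (c : I (k+1) →+ ℤ)
    (hT : ∀ x : ↥(Zc bd k), qZ 𝕂 (T x) = 0)
    (h : codiff bd 𝕂 k T = pair (k+1) ω - PhiMap 𝕂 (k+1) c) :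
    c ∈ (codiff bd ℤ k).range := by
  have hT' : ∀ x ∈ Zc bd k, T x ∈ intSub 𝕂 := fun x hx => (qZ_zero _).1 (hT ⟨x, hx⟩)
  have h' : ∀ β, T (bd k β) = pair (k+1) ω β - (c β : 𝕂) := fun β => DFunLike.congr_fun h β
  have hω : ω = 0 := int_triv _ _ fun β => by
    have : pair (k+1) ω β = T (bd k β) + (c β : 𝕂) := by rw [h']; ring
    rw [this]
    exact add_mem (hT' _ (mem_Zc_bd bd hbd k β)) (int_mem _)
  subst hω
  obtain ⟨r, hr1, hr2⟩ := exists_retr bd k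
  obtain ⟨S, hS⟩ := exists_int k (-(T.comp r)) fun x => neg_mem (hT' _ (hr1 x))
  refine ⟨S, ?_⟩
  ext β
  have h1 : ((S (bd k β) : ℤ) : 𝕂) = -(T (r (bd k β))) := DFunLike.congr_fun hS (bd k β)
  rw [hr2 _ (mem_Zc_bd bd hbd k β), h'] at h1
  rw [codiff_app]
  have : ((S (bd k β) : ℤ) : 𝕂) = (c β : 𝕂) := by simpa using h1
  exact_mod_cast this

set_option maxHeartbeats 2000000 in
/-- For `f ∈ Diff^k(𝒞𝒮)` and any lift `T ∈ F^k = Hom(I_k, 𝕂)` of `f`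
(which exists), `δT = ω̃ - c` for a unique pair `(ω, c) ∈ E^{k+1} × I^{k+1}`; the cochain
`c` is closed, its class `[c] ∈ H^{k+1}(I^•)` is independent of all choices, and the
resulting map `δ₂ : Diff^k(𝒞𝒮) → H^{k+1}(I^•)` is a surjective group homomorphism. -/
theorem statement2
    {𝕂 : Type*} [Field 𝕂] [CharZero 𝕂]
    (I E : ℕ → Type*)
    [∀ i, AddCommGroup (I i)] [∀ i, Module.Free ℤ (I i)]
    [∀ i, AddCommGroup (E i)] [∀ i, Module 𝕂 (E i)]
    (bd : ∀ k, I (k+1) →+ I k)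
    (hbd : ∀ k x, bd k (bd (k+1) x) = 0)
    (d : ∀ k, E k →+ E (k+1))
    (hd : ∀ k x, d (k+1) (d k x) = 0)
    (hdsmul : ∀ (k : ℕ) (c : 𝕂) (e : E k), d k (c • e) = c • d k e)
    (pair : ∀ k, E k →+ (I k →+ 𝕂))
    (pair_smul : ∀ (k : ℕ) (c : 𝕂) (e : E k) (x : I k), pair k (c • e) x = c * pair k e x)
    (pair_injE : ∀ k, Function.Injective (pair k))
    (pair_injI : ∀ (k : ℕ) (x y : I k), (∀ e : E k, pair k e x = pair k e y) → x = y)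
    (int_triv : ∀ (k : ℕ) (e : E k), (∀ β : I k, pair k e β ∈ intSub 𝕂) → e = 0)
    (stokes : ∀ (k : ℕ) (e : E k) (α : I (k+1)), pair k e (bd k α) = pair (k+1) (d k e) α)
    (deRham_inj : ∀ (k : ℕ) (e : E k), d k e = 0 → pair k e ∈ Bc (codiff bd 𝕂) k → e ∈ Bc d k)
    (deRham_surj : ∀ (k : ℕ) (h : I k →+ 𝕂), codiff bd 𝕂 k h = 0 →
      ∃ e : E k, d k e = 0 ∧ h - pair k e ∈ Bc (codiff bd 𝕂) k)
    (k : ℕ) :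
    (∀ f ∈ DiffChar bd hbd pair k, ∃ T : I k →+ 𝕂, ∀ x : ↥(Zc bd k), qZ 𝕂 (T x) = f x) ∧
    (∀ f ∈ DiffChar bd hbd pair k, ∀ T : I k →+ 𝕂, (∀ x : ↥(Zc bd k), qZ 𝕂 (T x) = f x) →
      ∃! p : E (k+1) × (I (k+1) →+ ℤ),
        codiff bd 𝕂 k T = pair (k+1) p.1 - PhiMap 𝕂 (k+1) p.2) ∧
    (∀ (T : I k →+ 𝕂) (ω : E (k+1)) (c : I (k+1) →+ ℤ),
        codiff bd 𝕂 k T = pair (k+1) ω - PhiMap 𝕂 (k+1) c →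
        c ∈ (codiff bd ℤ (k+1)).ker) ∧
    ∃ δ₂ : ↥(DiffChar bd hbd pair k) →+ Hc (codiff bd ℤ) (k+1),
      (∀ (f : ↥(DiffChar bd hbd pair k)) (T : I k →+ 𝕂) (ω : E (k+1))
          (c : I (k+1) →+ ℤ) (hc : c ∈ (codiff bd ℤ (k+1)).ker),
          (∀ x : ↥(Zc bd k), qZ 𝕂 (T x) = (f : ↥(Zc bd k) →+ KmodZ 𝕂) x) →
          codiff bd 𝕂 k T = pair (k+1) ω - PhiMap 𝕂 (k+1) c →
          δ₂ f = Hmk (codiff bd ℤ) (k+1) ⟨c, hc⟩) ∧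
      Function.Surjective δ₂ := by
  have P1 : ∀ f : ↥(Zc bd k) →+ KmodZ 𝕂,
      ∃ T : I k →+ 𝕂, ∀ x : ↥(Zc bd k), qZ 𝕂 (T x) = f x := by
    intro f
    obtain ⟨r, hr1, hr2⟩ := exists_retr bd k
    obtain ⟨T, hT⟩ := Module.projective_lifting_property (qZ 𝕂).toIntLinearMap
      (f.comp (r.codRestrict (Zc bd k) hr1)).toIntLinearMap
      (QuotientAddGroup.mk'_surjective _)
    refine ⟨T.toAddMonoidHom, fun x => ?_⟩
    have h1 : qZ 𝕂 (T x) = f ⟨r x, hr1 x⟩ := LinearMap.congr_fun hT (x : I k)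
    have h2 : (⟨r x, hr1 x⟩ : ↥(Zc bd k)) = x := Subtype.ext (hr2 _ x.2)
    rw [h2] at h1
    exact h1
  have P2 : ∀ f ∈ DiffChar bd hbd pair k, ∀ T : I k →+ 𝕂,
      (∀ x : ↥(Zc bd k), qZ 𝕂 (T x) = f x) →
      ∃ (ω : E (k+1)) (c : I (k+1) →+ ℤ),
        codiff bd 𝕂 k T = pair (k+1) ω - PhiMap 𝕂 (k+1) c := by
    rintro f ⟨ω, hω⟩ T hT
    obtain ⟨c, hc⟩ := exists_int (k+1) (pair (k+1) ω - codiff bd 𝕂 k T) fun β => by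
      rw [← qZ_zero, AddMonoidHom.sub_apply, map_sub, codiff_app, ← hω β,
        ← hT ⟨bd k β, mem_Zc_bd bd hbd k β⟩, sub_self]
    exact ⟨ω, c, by rw [hc]; abel⟩
  have P3 : ∀ (T : I k →+ 𝕂) (ω : E (k+1)) (c : I (k+1) →+ ℤ),
        codiff bd 𝕂 k T = pair (k+1) ω - PhiMap 𝕂 (k+1) c →
        c ∈ (codiff bd ℤ (k+1)).ker := by
    intro T ω c h
    have h' : ∀ β, T (bd k β) = pair (k+1) ω β - (c β : 𝕂) := fun β => DFunLike.congr_fun h β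
    have h2 : ∀ γ, pair (k+1+1) (d (k+1) ω) γ = (c (bd (k+1) γ) : 𝕂) := fun γ => by
      have := h' (bd (k+1) γ)
      rw [hbd, map_zero, stokes] at this
      exact (sub_eq_zero.1 this.symm)
    have h3 : d (k+1) ω = 0 := int_triv _ _ fun γ => by rw [h2]; exact int_mem _
    rw [AddMonoidHom.mem_ker]
    ext γ
    have := h2 γ
    rw [h3, map_zero, AddMonoidHom.zero_apply] at this
    rw [codiff_app]
    exact_mod_cast this.symm
  refine ⟨fun f _ => P1 f, fun f hf T hT => ?_, P3, ?_⟩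
  · obtain ⟨ω, c, h⟩ := P2 f hf T hT
    refine ⟨(ω, c), h, ?_⟩
    rintro ⟨ω', c'⟩ h'
    have h1 : ∀ β, pair (k+1) ω' β - (c' β : 𝕂) = pair (k+1) ω β - (c β : 𝕂) := fun β =>
      DFunLike.congr_fun (h'.symm.trans h) β
    have h2 : ω' = ω := sub_eq_zero.1 <| int_triv _ _ fun β => by
      have : pair (k+1) (ω' - ω) β = ((c' β - c β : ℤ) : 𝕂) := by
        rw [map_sub, AddMonoidHom.sub_apply]; push_cast; linear_combination h1 β
      rw [this]; exact int_mem _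
    subst h2
    refine Prod.ext rfl ?_
    ext β
    have : (c' β : 𝕂) = (c β : 𝕂) := by linear_combination -(h1 β)
    exact_mod_cast this
  · have ex : ∀ f : ↥(DiffChar bd hbd pair k), ∃ (T : I k →+ 𝕂) (ω : E (k+1))
        (c : I (k+1) →+ ℤ), (∀ x : ↥(Zc bd k), qZ 𝕂 (T x) = (f : ↥(Zc bd k) →+ KmodZ 𝕂) x) ∧
        codiff bd 𝕂 k T = pair (k+1) ω - PhiMap 𝕂 (k+1) c := fun f => by
      obtain ⟨T, hT⟩ := P1 f
      obtain ⟨ω, c, h⟩ := P2 f f.2 T hT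
      exact ⟨T, ω, c, hT, h⟩
    choose T ω c hT h using ex
    have mk_eq : ∀ (a b : ↥(codiff bd ℤ (k+1)).ker),
        (b : I (k+1) →+ ℤ) - a ∈ (codiff bd ℤ k).range →
        Hmk (codiff bd ℤ) (k+1) a = Hmk (codiff bd ℤ) (k+1) b := by
      intro a b hab
      refine QuotientAddGroup.eq.2 ?_
      rw [mem_addSubgroupOf]
      have e : ((-a + b : ↥(codiff bd ℤ (k+1)).ker) : I (k+1) →+ ℤ) = b - a := by
        push_cast; abel
      rw [e]; exact hab
    have wd : ∀ (f : ↥(DiffChar bd hbd pair k)) (T' : I k →+ 𝕂) (ω' : E (k+1))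
          (c' : I (k+1) →+ ℤ) (hc : c' ∈ (codiff bd ℤ (k+1)).ker),
          (∀ x : ↥(Zc bd k), qZ 𝕂 (T' x) = (f : ↥(Zc bd k) →+ KmodZ 𝕂) x) →
          codiff bd 𝕂 k T' = pair (k+1) ω' - PhiMap 𝕂 (k+1) c' →
          Hmk (codiff bd ℤ) (k+1) ⟨c f, P3 _ _ _ (h f)⟩ =
            Hmk (codiff bd ℤ) (k+1) ⟨c', hc⟩ := by
      intro f T' ω' c' hc hT' h'
      refine mk_eq _ _ (key_lemma bd hbd pair int_triv k (T' - T f) (ω' - ω f) _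
        (fun x => ?_) ?_)
      · rw [AddMonoidHom.sub_apply, map_sub, hT', hT, sub_self]
      · rw [map_sub, map_sub, map_sub, h', h]; abel
    refine ⟨AddMonoidHom.mk' (fun f => Hmk (codiff bd ℤ) (k+1) ⟨c f, P3 _ _ _ (h f)⟩) ?_,
      wd, ?_⟩
    · intro f g
      rw [← map_add]
      refine wd (f + g) (T f + T g) (ω f + ω g) _ _ (fun x => ?_) ?_
      · rw [AddMonoidHom.add_apply, map_add, hT, hT]; rfl
      · rw [map_add, map_add, map_add, h, h]; abel
    · intro y
      have hsj : Function.Surjective (Hmk (codiff bd ℤ) (k+1)) :=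
        QuotientAddGroup.mk'_surjective _
      obtain ⟨⟨c', hc'⟩, rfl⟩ := hsj y
      have hcl : codiff bd 𝕂 (k+1) (PhiMap 𝕂 (k+1) c') = 0 := by
        ext γ
        have : c' (bd (k+1) γ) = 0 := DFunLike.congr_fun hc' γ
        rw [codiff_app, PhiMap_app, this]; simp
      obtain ⟨e, -, T', hT'⟩ := deRham_surj (k+1) _ hcl
      have hh : codiff bd 𝕂 k (-T') = pair (k+1) e - PhiMap 𝕂 (k+1) c' := by
        rw [map_neg, hT']; abel
      let f : ↥(DiffChar bd hbd pair k) :=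
        ⟨((qZ 𝕂).comp (-T')).comp (Zc bd k).subtype, e, fun β => by
          show qZ 𝕂 ((-T') (bd k β)) = _
          have : (-T') (bd k β) = pair (k+1) e β - (c' β : 𝕂) := DFunLike.congr_fun hh β
          rw [this, map_sub, (qZ_zero _).2 (int_mem _), sub_zero]⟩
      exact ⟨f, wd f (-T') e c' hc' (fun x => rfl) hh⟩

end
end

section
/- Let (E^•, I_•, ∫) be a Cheeger–Simons model over 𝕂 and k ≥ 0. There is a short exact sequence of abelian groups 0 → H^k(Hom(I_•, 𝕂/ℤ)) → Diff^k(CS) → E^{k+1}_0 → 0, where the first map sends the class [σ] of a δ-closed σ ∈ Hom(I_k, 𝕂/ℤ) to its restriction σ|_{Z_k(I_•)}, and the second map is δ₁, which assigns to f the unique ω ∈ E^{k+1} with f(∂β) ≡ ∫_β ω (mod ℤ) for all β ∈ I_{k+1}. -/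
open AddSubgroup

noncomputable section

theorem ext_KmodZ_aux {𝕂 : Type*} [Field 𝕂] [CharZero 𝕂] {A B : Type*} [AddCommGroup A]
    [AddCommGroup B] (φ : A →+ B) (g : A →+ KmodZ 𝕂) (h : ∀ a, φ a = 0 → g a = 0) :
    ∃ e : B →+ KmodZ 𝕂, ∀ a, e (φ a) = g a := by
  letI : DivisibleBy (KmodZ 𝕂) ℤ :=
    Function.Surjective.divisibleBy (A := 𝕂) (α := ℤ) (qZ 𝕂)
      (QuotientAddGroup.mk'_surjective _) (fun a n => map_zsmul (qZ 𝕂) n a)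
  have hB : Module.Baer ℤ (KmodZ 𝕂) := Module.Baer.of_divisible _
  obtain ⟨e, he⟩ := hB.extension_property_addMonoidHom (QuotientAddGroup.kerLift φ)
    (QuotientAddGroup.kerLift_injective φ)
    (QuotientAddGroup.lift φ.ker g (fun a ha => h a ha))
  refine ⟨e, fun a => ?_⟩
  exact DFunLike.congr_fun he (QuotientAddGroup.mk a)

theorem qZ_eq_zero_aux {𝕂 : Type*} [Field 𝕂] (x : 𝕂) : qZ 𝕂 x = 0 ↔ x ∈ intSub 𝕂 :=
  QuotientAddGroup.eq_zero_iff x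

theorem Bc_of_vanish_aux {𝕂 : Type*} [Field 𝕂] [CharZero 𝕂] {I : ℕ → Type*}
    [∀ i, AddCommGroup (I i)] (bd : ∀ k, I (k+1) →+ I k) :
    ∀ (k : ℕ) (σ : I k →+ KmodZ 𝕂), (∀ z ∈ Zc bd k, σ z = 0) ↔ σ ∈ Bc (codiff bd (KmodZ 𝕂)) k
  | 0, σ => by
    constructor
    · intro h
      have : σ = 0 := by ext z; exact h z (mem_top _)
      rw [this]; exact zero_mem _
    · intro h z _
      have : σ = 0 := h
      rw [this]; rfl
  | n+1, σ => by
    constructor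
    · intro h
      obtain ⟨e, he⟩ := ext_KmodZ_aux (bd n) σ (fun a ha => h a ha)
      exact ⟨e, by ext a; exact he a⟩
    · rintro ⟨e, rfl⟩ z hz
      have hz' : bd n z = 0 := hz
      change e (bd n z) = 0
      rw [hz', map_zero]

/-- There is a short exact sequence
`0 → H^k(Hom(I_•, 𝕂/ℤ)) → Diff^k(𝒞𝒮) → E^{k+1}_0 → 0`, where the first map sends the
class of a `δ`-closed `σ : I_k → 𝕂/ℤ` to its restriction to `Z_k(I_•)` and the second is
`δ₁`, sending `f` to the unique `ω` with `f(∂β) ≡ ∫_β ω (mod ℤ)` for all `β`. -/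
theorem statement3
    {𝕂 : Type*} [Field 𝕂] [CharZero 𝕂]
    (I E : ℕ → Type*)
    [∀ i, AddCommGroup (I i)] [∀ i, Module.Free ℤ (I i)]
    [∀ i, AddCommGroup (E i)] [∀ i, Module 𝕂 (E i)]
    (bd : ∀ k, I (k+1) →+ I k)
    (hbd : ∀ k x, bd k (bd (k+1) x) = 0)
    (d : ∀ k, E k →+ E (k+1))
    (hd : ∀ k x, d (k+1) (d k x) = 0)
    (hdsmul : ∀ (k : ℕ) (c : 𝕂) (e : E k), d k (c • e) = c • d k e)
    (pair : ∀ k, E k →+ (I k →+ 𝕂))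
    (pair_smul : ∀ (k : ℕ) (c : 𝕂) (e : E k) (x : I k), pair k (c • e) x = c * pair k e x)
    (pair_injE : ∀ k, Function.Injective (pair k))
    (pair_injI : ∀ (k : ℕ) (x y : I k), (∀ e : E k, pair k e x = pair k e y) → x = y)
    (int_triv : ∀ (k : ℕ) (e : E k), (∀ β : I k, pair k e β ∈ intSub 𝕂) → e = 0)
    (stokes : ∀ (k : ℕ) (e : E k) (α : I (k+1)), pair k e (bd k α) = pair (k+1) (d k e) α)
    (deRham_inj : ∀ (k : ℕ) (e : E k), d k e = 0 → pair k e ∈ Bc (codiff bd 𝕂) k → e ∈ Bc d k)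
    (deRham_surj : ∀ (k : ℕ) (h : I k →+ 𝕂), codiff bd 𝕂 k h = 0 →
      ∃ e : E k, d k e = 0 ∧ h - pair k e ∈ Bc (codiff bd 𝕂) k)
    (k : ℕ) :
    ∃ (ι : Hc (codiff bd (KmodZ 𝕂)) k →+ ↥(DiffChar bd hbd pair k))
      (δ₁ : ↥(DiffChar bd hbd pair k) →+ E (k+1)),
      (∀ (σ : I k →+ KmodZ 𝕂) (hσ : σ ∈ (codiff bd (KmodZ 𝕂) k).ker),
          ((ι (Hmk (codiff bd (KmodZ 𝕂)) k ⟨σ, hσ⟩)) : ↥(Zc bd k) →+ KmodZ 𝕂)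
            = σ.comp (Zc bd k).subtype) ∧
      (∀ (f : ↥(DiffChar bd hbd pair k)) (β : I (k+1)),
          (f : ↥(Zc bd k) →+ KmodZ 𝕂) ⟨bd k β, mem_Zc_bd bd hbd k β⟩
            = qZ 𝕂 (pair (k+1) (δ₁ f) β)) ∧
      Function.Injective ι ∧
      (∀ f, δ₁ f ∈ Ezero bd d pair (k+1)) ∧
      (∀ ω ∈ Ezero bd d pair (k+1), ∃ f, δ₁ f = ω) ∧
      (∀ f, δ₁ f = 0 ↔ f ∈ ι.range) := by
  have uniq : ∀ ω ω' : E (k+1),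
      (∀ β, qZ 𝕂 (pair (k+1) ω β) = qZ 𝕂 (pair (k+1) ω' β)) → ω = ω' := by
    intro ω ω' h
    refine sub_eq_zero.mp (int_triv _ _ fun β => ?_)
    rw [← qZ_eq_zero_aux, map_sub, AddMonoidHom.sub_apply, map_sub, h β, sub_self]
  choose D hD using fun f : ↥(DiffChar bd hbd pair k) => f.2
  have restr_mem : ∀ σ : ↥(codiff bd (KmodZ 𝕂) k).ker,
      σ.1.comp (Zc bd k).subtype ∈ DiffChar bd hbd pair k := by
    intro σ
    refine ⟨0, fun β => ?_⟩
    have h : σ.1 (bd k β) = 0 := DFunLike.congr_fun (f := codiff bd (KmodZ 𝕂) k σ.1) σ.2 β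
    rw [map_zero, AddMonoidHom.zero_apply, map_zero]
    exact h
  let r : ↥(codiff bd (KmodZ 𝕂) k).ker →+ ↥(DiffChar bd hbd pair k) :=
    AddMonoidHom.mk' (fun σ => ⟨σ.1.comp (Zc bd k).subtype, restr_mem σ⟩)
      (fun σ τ => by ext z; rfl)
  have hr : ∀ σ, r σ = 0 ↔ σ ∈ (Bc (codiff bd (KmodZ 𝕂)) k).addSubgroupOf
      (codiff bd (KmodZ 𝕂) k).ker := by
    intro σ
    rw [AddSubgroup.mem_addSubgroupOf, ← Bc_of_vanish_aux]
    constructor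
    · intro h z hz
      exact DFunLike.congr_fun (congrArg Subtype.val h) (⟨z, hz⟩ : ↥(Zc bd k))
    · intro h
      apply Subtype.ext
      ext z
      exact h z.1 z.2
  let ι : Hc (codiff bd (KmodZ 𝕂)) k →+ ↥(DiffChar bd hbd pair k) :=
    QuotientAddGroup.lift _ r (fun σ h => (hr σ).2 h)
  let δ₁ : ↥(DiffChar bd hbd pair k) →+ E (k+1) := AddMonoidHom.mk' D (by
    intro f g
    apply uniq
    intro β
    rw [← hD, map_add, AddMonoidHom.add_apply, map_add, ← hD, ← hD]
    rfl)
  have hδ : ∀ (f : ↥(DiffChar bd hbd pair k)) (β : I (k+1)),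
      (f : ↥(Zc bd k) →+ KmodZ 𝕂) ⟨bd k β, mem_Zc_bd bd hbd k β⟩
        = qZ 𝕂 (pair (k+1) (δ₁ f) β) := hD
  have hz : ∀ (f : ↥(Zc bd k) →+ KmodZ 𝕂) (β : I (k+1)), bd k β = 0 →
      f ⟨bd k β, mem_Zc_bd bd hbd k β⟩ = 0 := by
    intro f β h
    have : (⟨bd k β, mem_Zc_bd bd hbd k β⟩ : ↥(Zc bd k)) = 0 := Subtype.ext h
    rw [this, map_zero]
  refine ⟨ι, δ₁, fun σ hσ => rfl, hδ, ?_, ?_, ?_, ?_⟩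
  · rw [injective_iff_map_eq_zero]
    intro x
    obtain ⟨σ, rfl⟩ := QuotientAddGroup.mk_surjective x
    intro h
    exact (QuotientAddGroup.eq_zero_iff σ).2 ((hr σ).1 h)
  · intro f
    constructor
    · apply int_triv
      intro α
      rw [← stokes, ← qZ_eq_zero_aux, ← hδ]
      exact hz _ _ (hbd k α)
    · intro α hα
      rw [← qZ_eq_zero_aux, ← hδ]
      exact hz _ _ hα
  · rintro ω ⟨-, hω⟩
    let φ : I (k+1) →+ ↥(Zc bd k) := (bd k).codRestrict (Zc bd k) (mem_Zc_bd bd hbd k)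
    obtain ⟨f, hf⟩ := ext_KmodZ_aux φ ((qZ 𝕂).comp (pair (k+1) ω)) (fun a ha =>
      (qZ_eq_zero_aux _).2 (hω a (congrArg Subtype.val ha)))
    refine ⟨⟨f, ω, hf⟩, uniq _ _ fun β => ?_⟩
    rw [← hδ]
    exact hf β
  · intro f
    constructor
    · intro h
      obtain ⟨σ, hσ⟩ := ext_KmodZ_aux (Zc bd k).subtype f.1 (fun a ha => by
        have : a = 0 := Subtype.ext ha
        rw [this, map_zero])
      have hk : σ ∈ (codiff bd (KmodZ 𝕂) k).ker := by
        rw [AddMonoidHom.mem_ker]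
        ext β
        have h1 := hσ ⟨bd k β, mem_Zc_bd bd hbd k β⟩
        rw [hδ, h, map_zero, AddMonoidHom.zero_apply, map_zero] at h1
        exact h1
      refine ⟨Hmk _ k ⟨σ, hk⟩, ?_⟩
      apply Subtype.ext
      ext z
      exact hσ z
    · rintro ⟨x, rfl⟩
      obtain ⟨σ, rfl⟩ := QuotientAddGroup.mk_surjective x
      apply uniq
      intro β
      rw [← hδ, map_zero, AddMonoidHom.zero_apply, map_zero]
      exact DFunLike.congr_fun (f := codiff bd (KmodZ 𝕂) k σ.1) σ.2 β

end
end

section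
/- Let (E^•, I_•, ∫) be a Cheeger–Simons model over 𝕂 and k ≥ 0. For ω ∈ E^k with dω = 0, one has ∫_α ω ∈ ℤ for all α ∈ Z_k(I_•) if and only if the class [ω̃] ∈ H^k(F^•) lies in Φ_*(H^k(I^•)). Equivalently: the image of E^k_0 in H^k(F^•) under the de Rham isomorphism (i.e., the set of classes [ω̃] for ω ∈ E^k_0) is exactly Φ_*(H^k(I^•)). -/
open AddSubgroup

noncomputable section

theorem aux_int_lift {𝕂 : Type*} [Field 𝕂] [CharZero 𝕂] {A : Type*} [AddCommGroup A]
    (g : A →+ 𝕂) (h : ∀ a, g a ∈ intSub 𝕂) : ∃ u : A →+ ℤ, ∀ a, ((u a : ℤ) : 𝕂) = g a := by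
  have h' : ∀ a, ∃ n : ℤ, (n : 𝕂) = g a := by
    intro a
    obtain ⟨n, hn⟩ := AddSubgroup.mem_zmultiples_iff.mp (h a)
    exact ⟨n, by simpa using hn⟩
  choose u hu using h'
  refine ⟨AddMonoidHom.mk' u (fun a b => ?_), hu⟩
  have : ((u (a + b) : ℤ) : 𝕂) = ((u a + u b : ℤ) : 𝕂) := by
    push_cast
    rw [hu, hu, hu, map_add]
  exact_mod_cast this

/-- A homomorphism on `A` integral on `ker b` is integral up to one factoring through `b`. -/
theorem aux_split {𝕂 : Type*} [Field 𝕂] [CharZero 𝕂] {A B : Type*} [AddCommGroup A]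
    [AddCommGroup B] [Module.Free ℤ B] (b : A →+ B) (g : A →+ 𝕂)
    (h : ∀ a ∈ b.ker, g a ∈ intSub 𝕂) :
    ∃ (u : A →+ ℤ) (v : B →+ 𝕂), ∀ a, g a - ((u a : ℤ) : 𝕂) = v (b a) := by
  let q : 𝕂 →+ KmodZ 𝕂 := qZ 𝕂
  have hq : ∀ x, q x = 0 ↔ x ∈ intSub 𝕂 := fun x => QuotientAddGroup.eq_zero_iff x
  have hqs : Function.Surjective q := QuotientAddGroup.mk'_surjective _
  have hker : b.ker ≤ (q.comp g).ker := fun a ha => (hq _).mpr (h a ha)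
  letI : DivisibleBy (KmodZ 𝕂) ℤ := divisibleByOfSMulRightSurj _ _ (by
    intro n hn y
    obtain ⟨x, rfl⟩ := hqs y
    have hn' : (n : 𝕂) ≠ 0 := by exact_mod_cast hn
    refine ⟨q ((n : 𝕂)⁻¹ * x), ?_⟩
    change n • q ((n : 𝕂)⁻¹ * x) = q x
    rw [← map_zsmul, zsmul_eq_mul, mul_inv_cancel_left₀ hn'])
  obtain ⟨w, hw⟩ := Module.Baer.extension_property_addMonoidHom
    (Module.Baer.of_divisible (KmodZ 𝕂)) (QuotientAddGroup.kerLift b)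
    (QuotientAddGroup.kerLift_injective b) (QuotientAddGroup.lift b.ker (q.comp g) hker)
  have hw' : ∀ a, w (b a) = q (g a) := fun a =>
    DFunLike.congr_fun hw (QuotientAddGroup.mk a)
  obtain ⟨v, hv⟩ := Module.projective_lifting_property q.toIntLinearMap w.toIntLinearMap hqs
  have hv' : ∀ y, q (v y) = w y := fun y => LinearMap.congr_fun hv y
  obtain ⟨u, hu⟩ := aux_int_lift (g - v.toAddMonoidHom.comp b) (by
    intro a
    rw [← hq, AddMonoidHom.sub_apply, map_sub, sub_eq_zero, ← hw', ← hv']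
    rfl)
  refine ⟨u, v.toAddMonoidHom, fun a => ?_⟩
  rw [hu]
  simp

/-- For closed `ω ∈ E^k`, `ω` has integral periods on `Z_k(I_•)` iff the
class `[ω̃] ∈ H^k(F^•)` lies in `Φ_*(H^k(I^•))`, i.e. iff `ω̃ - Φ(u)` is a coboundary for
some closed integral cochain `u`.  Thus the image of `E^k_0` in `H^k(F^•)` under the
de Rham isomorphism is exactly `Φ_*(H^k(I^•))`. -/
theorem statement5
    {𝕂 : Type*} [Field 𝕂] [CharZero 𝕂]
    (I E : ℕ → Type*)
    [∀ i, AddCommGroup (I i)] [∀ i, Module.Free ℤ (I i)]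
    [∀ i, AddCommGroup (E i)] [∀ i, Module 𝕂 (E i)]
    (bd : ∀ k, I (k+1) →+ I k)
    (hbd : ∀ k x, bd k (bd (k+1) x) = 0)
    (d : ∀ k, E k →+ E (k+1))
    (hd : ∀ k x, d (k+1) (d k x) = 0)
    (hdsmul : ∀ (k : ℕ) (c : 𝕂) (e : E k), d k (c • e) = c • d k e)
    (pair : ∀ k, E k →+ (I k →+ 𝕂))
    (pair_smul : ∀ (k : ℕ) (c : 𝕂) (e : E k) (x : I k), pair k (c • e) x = c * pair k e x)
    (pair_injE : ∀ k, Function.Injective (pair k))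
    (pair_injI : ∀ (k : ℕ) (x y : I k), (∀ e : E k, pair k e x = pair k e y) → x = y)
    (int_triv : ∀ (k : ℕ) (e : E k), (∀ β : I k, pair k e β ∈ intSub 𝕂) → e = 0)
    (stokes : ∀ (k : ℕ) (e : E k) (α : I (k+1)), pair k e (bd k α) = pair (k+1) (d k e) α)
    (deRham_inj : ∀ (k : ℕ) (e : E k), d k e = 0 → pair k e ∈ Bc (codiff bd 𝕂) k → e ∈ Bc d k)
    (deRham_surj : ∀ (k : ℕ) (h : I k →+ 𝕂), codiff bd 𝕂 k h = 0 →
      ∃ e : E k, d k e = 0 ∧ h - pair k e ∈ Bc (codiff bd 𝕂) k)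
    (k : ℕ) :
    ∀ ω : E k, d k ω = 0 →
      ((∀ α ∈ Zc bd k, pair k ω α ∈ intSub 𝕂) ↔
        ∃ u : I k →+ ℤ, u ∈ (codiff bd ℤ k).ker ∧
          pair k ω - PhiMap 𝕂 k u ∈ Bc (codiff bd 𝕂) k) := by
  intro ω hω
  have hcl : ∀ x, pair k ω (bd k x) = 0 := fun x => by rw [stokes, hω]; simp
  constructor
  · intro hα
    cases k with
    | zero =>
      obtain ⟨u, hu⟩ := aux_int_lift (pair 0 ω) (fun a => hα a (mem_top _))
      refine ⟨u, ?_, ?_⟩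
      · rw [AddMonoidHom.mem_ker]
        ext x
        have : ((u (bd 0 x) : ℤ) : 𝕂) = 0 := by rw [hu, hcl]
        exact_mod_cast this
      · have : pair 0 ω - PhiMap 𝕂 0 u = 0 := by
          ext x
          have : pair 0 ω x - ((u x : ℤ) : 𝕂) = 0 := by rw [hu, sub_self]
          exact this
        rw [this]
        exact zero_mem _
    | succ n =>
      obtain ⟨u, v, huv⟩ := aux_split (bd n) (pair (n+1) ω) hα
      refine ⟨u, ?_, v, ?_⟩
      · rw [AddMonoidHom.mem_ker]
        ext x
        have h1 := huv (bd (n+1) x)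
        rw [hcl, hbd, map_zero, zero_sub, neg_eq_zero] at h1
        exact_mod_cast h1
      · ext x
        exact (huv x).symm
  · rintro ⟨u, -, hB⟩ α hα
    suffices h : pair k ω α = ((u α : ℤ) : 𝕂) by
      rw [h]
      exact AddSubgroup.mem_zmultiples_iff.mpr ⟨u α, by simp⟩
    rw [← sub_eq_zero]
    cases k with
    | zero =>
      exact DFunLike.congr_fun (AddSubgroup.mem_bot.mp hB) α
    | succ n =>
      obtain ⟨v, hv⟩ := hB
      have h1 : v (bd n α) = pair (n+1) ω α - ((u α : ℤ) : 𝕂) := DFunLike.congr_fun hv α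
      have h2 : bd n α = 0 := hα
      rw [← h1, h2, map_zero]

end
end

section
/- Let S = (F^•, E^•, I^•) be a general spark complex and k ≥ 0, and let P^{k+1}(S) = {(w, [u]) ∈ E^{k+1} × H^{k+1}(I^•) : Ψ_*[u] = [w] in H^{k+1}(F^•)}. Then there is a short exact sequence of abelian groups 0 → H^k(F^•)/Ψ_*(H^k(I^•)) → Ĥ^k(S) → P^{k+1}(S) → 0, where the first map sends the class of a d-closed a ∈ F^k to the spark class [(a, 0, 0)], and the second map is δ'([(a, e, r)]) = (e, [r]). -/
open AddSubgroup

noncomputable section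

section Spark

variable {F E Ic : ℕ → Type*}
  [∀ i, AddCommGroup (F i)] [∀ i, AddCommGroup (E i)] [∀ i, AddCommGroup (Ic i)]

/-- The group of general sparks of degree `k` of a general spark complex
`(F^•, E^•, I^•)`: triples `(a, e, r)` with `da = e - Ψ(r)` (inside `F^{k+1}`,
via the embedding `j : E^• ↪ F^•`) and `dr = 0`. -/
def Sparks (dF : ∀ k, F k →+ F (k+1)) (dI : ∀ k, Ic k →+ Ic (k+1))
    (Ψ : ∀ k, Ic k →+ F k) (j : ∀ k, E k →+ F k) (k : ℕ) :
    AddSubgroup (F k × E (k+1) × Ic (k+1)) where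
  carrier := {p | dF k p.1 = j (k+1) p.2.1 - Ψ (k+1) p.2.2 ∧ dI (k+1) p.2.2 = 0}
  add_mem' := by
    rintro p q ⟨h1, h2⟩ ⟨h1', h2'⟩
    refine ⟨?_, ?_⟩ <;> simp [Prod.fst_add, Prod.snd_add, h1, h1', h2, h2'] <;> abel
  zero_mem' := by simp
  neg_mem' := by
    rintro p ⟨h1, h2⟩
    refine ⟨?_, ?_⟩ <;> simp [Prod.fst_neg, Prod.snd_neg, h1, h2] <;> abel

/-- The subgroup of sparks equivalent to `0`: a spark `(a, e, r)` is trivial when there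
are `b ∈ F^{k-1}` and `s ∈ I^k` with `a = db + Ψ(s)` and `r = -ds`. -/
def SparkRel (dF : ∀ k, F k →+ F (k+1)) (dI : ∀ k, Ic k →+ Ic (k+1))
    (Ψ : ∀ k, Ic k →+ F k) (j : ∀ k, E k →+ F k) (k : ℕ) :
    AddSubgroup ↥(Sparks dF dI Ψ j k) where
  carrier := {p | ∃ s : Ic k,
      (p : F k × E (k+1) × Ic (k+1)).1 - Ψ k s ∈ Bc dF k ∧
      (p : F k × E (k+1) × Ic (k+1)).2.2 = -(dI k s)}
  add_mem' := by
    rintro p q ⟨s, hs1, hs2⟩ ⟨t, ht1, ht2⟩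
    refine ⟨s + t, ?_, ?_⟩
    · have := add_mem hs1 ht1
      simpa [Prod.fst_add, map_add, add_sub_add_comm] using this
    · simp [Prod.snd_add, hs2, ht2]
      abel
  zero_mem' := ⟨0, by simp [zero_mem], by simp⟩
  neg_mem' := by
    rintro p ⟨s, hs1, hs2⟩
    refine ⟨-s, ?_, ?_⟩
    · have := neg_mem hs1
      simpa [Prod.fst_neg, map_neg, neg_sub, sub_eq_add_neg, add_comm] using this
    · simp [Prod.snd_neg, hs2]
  
/-- The group `Ĥ^k(𝒮)` of spark classes of degree `k`. -/
abbrev SparkH (dF : ∀ k, F k →+ F (k+1)) (dI : ∀ k, Ic k →+ Ic (k+1))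
    (Ψ : ∀ k, Ic k →+ F k) (j : ∀ k, E k →+ F k) (k : ℕ) :=
  ↥(Sparks dF dI Ψ j k) ⧸ SparkRel dF dI Ψ j k

/-- The class of a spark in `Ĥ^k(𝒮)`. -/
def sparkMk (dF : ∀ k, F k →+ F (k+1)) (dI : ∀ k, Ic k →+ Ic (k+1))
    (Ψ : ∀ k, Ic k →+ F k) (j : ∀ k, E k →+ F k) (k : ℕ) :
    ↥(Sparks dF dI Ψ j k) →+ SparkH dF dI Ψ j k :=
  QuotientAddGroup.mk' _

end Spark


/-- With `P^{k+1}(𝒮) = {(w, [u]) ∈ E^{k+1} × H^{k+1}(I^•) : Ψ_*[u] = [w]}`,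
there is a short exact sequence
`0 → H^k(F^•)/Ψ_*(H^k(I^•)) → Ĥ^k(𝒮) → P^{k+1}(𝒮) → 0`,
where the first map sends the class of a `d`-closed `a ∈ F^k` to the spark class
`[(a, 0, 0)]` and the second map is `δ'([(a, e, r)]) = (e, [r])`. -/
theorem statement8
    (F E Ic : ℕ → Type*)
    [∀ i, AddCommGroup (F i)] [∀ i, AddCommGroup (E i)] [∀ i, AddCommGroup (Ic i)]
    (dF : ∀ k, F k →+ F (k+1)) (hdF : ∀ k x, dF (k+1) (dF k x) = 0)
    (dE : ∀ k, E k →+ E (k+1)) (hdE : ∀ k x, dE (k+1) (dE k x) = 0)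
    (dI : ∀ k, Ic k →+ Ic (k+1)) (hdI : ∀ k x, dI (k+1) (dI k x) = 0)
    (Ψ : ∀ k, Ic k →+ F k) (hΨ : ∀ k x, Ψ (k+1) (dI k x) = dF k (Ψ k x))
    (j : ∀ k, E k →+ F k) (hj : ∀ k x, j (k+1) (dE k x) = dF k (j k x))
    (hjinj : ∀ k, Function.Injective (j k))
    (hiso_inj : ∀ (k : ℕ) (e : E k), dE k e = 0 → j k e ∈ Bc dF k → e ∈ Bc dE k)
    (hiso_surj : ∀ (k : ℕ) (a : F k), dF k a = 0 →
      ∃ e : E k, dE k e = 0 ∧ a - j k e ∈ Bc dF k)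
    (k : ℕ) :
    ∃ (ι : Hc dF k →+ SparkH dF dI Ψ j k)
      (δ'₁ : SparkH dF dI Ψ j k →+ E (k+1))
      (δ'₂ : SparkH dF dI Ψ j k →+ Hc dI (k+1)),
      (∀ (a : F k) (ha : a ∈ (dF k).ker),
          ∃ hsp : ((a, 0, 0) : F k × E (k+1) × Ic (k+1)) ∈ Sparks dF dI Ψ j k,
            ι (Hmk dF k ⟨a, ha⟩) = sparkMk dF dI Ψ j k ⟨(a, 0, 0), hsp⟩) ∧
      (∀ (a : F k) (ha : a ∈ (dF k).ker),
          ι (Hmk dF k ⟨a, ha⟩) = 0 ↔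
            ∃ u : Ic k, dI k u = 0 ∧ a - Ψ k u ∈ Bc dF k) ∧
      (∀ p : ↥(Sparks dF dI Ψ j k),
          δ'₁ (sparkMk dF dI Ψ j k p) = (p : F k × E (k+1) × Ic (k+1)).2.1) ∧
      (∀ (p : ↥(Sparks dF dI Ψ j k))
          (hr : (p : F k × E (k+1) × Ic (k+1)).2.2 ∈ (dI (k+1)).ker),
          δ'₂ (sparkMk dF dI Ψ j k p)
            = Hmk dI (k+1) ⟨(p : F k × E (k+1) × Ic (k+1)).2.2, hr⟩) ∧
      (∀ x : SparkH dF dI Ψ j k, dE (k+1) (δ'₁ x) = 0 ∧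
          ∃ (u : Ic (k+1)) (hu : u ∈ (dI (k+1)).ker),
            δ'₂ x = Hmk dI (k+1) ⟨u, hu⟩ ∧
            j (k+1) (δ'₁ x) - Ψ (k+1) u ∈ Bc dF (k+1)) ∧
      (∀ (w : E (k+1)) (u : Ic (k+1)) (hu : u ∈ (dI (k+1)).ker),
          dE (k+1) w = 0 → j (k+1) w - Ψ (k+1) u ∈ Bc dF (k+1) →
          ∃ x, δ'₁ x = w ∧ δ'₂ x = Hmk dI (k+1) ⟨u, hu⟩) ∧
      (∀ x, (δ'₁ x = 0 ∧ δ'₂ x = 0) ↔ x ∈ ι.range) := by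
  have hBk : ∀ (k : ℕ) (x : F k), x ∈ Bc dF k → dF k x = 0 := by
    intro k x hx
    cases k with
    | zero =>
      have : x = 0 := hx
      rw [this, map_zero]
    | succ n =>
      obtain ⟨y, rfl⟩ := hx
      exact hdF n y
  -- the map ι
  let f : ↥(dF k).ker →+ ↥(Sparks dF dI Ψ j k) :=
    { toFun := fun a => ⟨(a.1, 0, 0), by
        have h : dF k a.1 = 0 := a.2
        exact ⟨by simp [h], by simp⟩⟩
      map_zero' := rfl
      map_add' := fun a b => by
        apply Subtype.ext
        simp }
  let ι : Hc dF k →+ SparkH dF dI Ψ j k :=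
    QuotientAddGroup.lift _ ((sparkMk dF dI Ψ j k).comp f) (by
      intro a ha
      refine (QuotientAddGroup.eq_zero_iff _).2 ⟨0, ?_, ?_⟩
      · have : a.1 ∈ Bc dF k := ha
        simpa [f] using this
      · simp [f])
  let g₁ : ↥(Sparks dF dI Ψ j k) →+ E (k+1) :=
    { toFun := fun p => p.1.2.1
      map_zero' := rfl
      map_add' := fun _ _ => rfl }
  let g₂ : ↥(Sparks dF dI Ψ j k) →+ ↥(dI (k+1)).ker :=
    { toFun := fun p => ⟨p.1.2.2, p.2.2⟩
      map_zero' := rfl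
      map_add' := fun _ _ => rfl }
  let δ₁ : SparkH dF dI Ψ j k →+ E (k+1) :=
    QuotientAddGroup.lift _ g₁ (by
      rintro p ⟨s, hs1, hs2⟩
      have h1 := p.2.1
      have h2 := hBk k _ hs1
      rw [map_sub, sub_eq_zero] at h2
      rw [h2, hs2, map_neg, hΨ, sub_neg_eq_add] at h1
      have h3 : j (k+1) p.1.2.1 = 0 := by
        simpa using h1.symm
      exact hjinj (k+1) (by rw [map_zero]; exact h3))
  let δ₂ : SparkH dF dI Ψ j k →+ Hc dI (k+1) :=
    QuotientAddGroup.lift _ ((Hmk dI (k+1)).comp g₂) (by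
      rintro p ⟨s, hs1, hs2⟩
      refine (QuotientAddGroup.eq_zero_iff _).2 ?_
      change p.1.2.2 ∈ (dI k).range
      exact ⟨-s, by rw [map_neg, hs2]⟩)
  have e₁ : ∀ p, δ₁ (sparkMk dF dI Ψ j k p) = p.1.2.1 := fun _ => rfl
  have e₂ : ∀ p, δ₂ (sparkMk dF dI Ψ j k p) = Hmk dI (k+1) ⟨p.1.2.2, p.2.2⟩ := fun _ => rfl
  have eι : ∀ a, ι (Hmk dF k a) = sparkMk dF dI Ψ j k (f a) := fun _ => rfl
  have hsurj : ∀ x : SparkH dF dI Ψ j k, ∃ p, sparkMk dF dI Ψ j k p = x :=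
    QuotientAddGroup.mk'_surjective _
  refine ⟨ι, δ₁, δ₂, ?_, ?_, e₁, fun p _ => e₂ p, ?_, ?_, ?_⟩
  · intro a ha
    exact ⟨(f ⟨a, ha⟩).2, rfl⟩
  · intro a ha
    rw [eι]
    refine (QuotientAddGroup.eq_zero_iff _).trans ⟨?_, ?_⟩
    · rintro ⟨s, h1, h2⟩
      exact ⟨s, neg_eq_zero.1 h2.symm, h1⟩
    · rintro ⟨s, h1, h2⟩
      exact ⟨s, h2, by simp [f, h1]⟩
  · intro x
    obtain ⟨p, rfl⟩ := hsurj x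
    have h1 := p.2.1
    have h2 := p.2.2
    rw [e₁]
    refine ⟨?_, p.1.2.2, h2, e₂ p, p.1.1, h1⟩
    apply hjinj (k+1+1)
    rw [map_zero, hj, eq_add_of_sub_eq h1.symm, map_add, hdF, ← hΨ, h2, map_zero, zero_add]
  · rintro w u hu - ⟨a, ha⟩
    exact ⟨sparkMk dF dI Ψ j k ⟨(a, w, u), ha, hu⟩, rfl, rfl⟩
  · intro x
    constructor
    · obtain ⟨p, rfl⟩ := hsurj x
      rintro ⟨h1, h2⟩
      rw [e₁] at h1
      rw [e₂] at h2
      have h3' := (QuotientAddGroup.eq_zero_iff (⟨p.1.2.2, p.2.2⟩ : ↥(dI (k+1)).ker)).1 h2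
      have h3 : p.1.2.2 ∈ (dI k).range := h3'
      obtain ⟨s, hs⟩ := h3
      have h4 := p.2.1
      have ha : dF k (p.1.1 + Ψ k s) = 0 := by
        rw [map_add, h4, h1, ← hs, hΨ, map_zero, zero_sub, neg_add_cancel]
      refine ⟨Hmk dF k ⟨p.1.1 + Ψ k s, ha⟩, ?_⟩
      rw [eι, ← sub_eq_zero, ← map_sub]
      refine (QuotientAddGroup.eq_zero_iff _).2 ⟨s, ?_, ?_⟩
      · have : ((f ⟨p.1.1 + Ψ k s, ha⟩ - p : ↥(Sparks dF dI Ψ j k)) :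
            F k × E (k+1) × Ic (k+1)).1 - Ψ k s = 0 := by
          simp [f]
        rw [this]
        exact zero_mem _
      · simp [f, hs]
    · rintro ⟨y, rfl⟩
      obtain ⟨a, rfl⟩ : ∃ a, Hmk dF k a = y := QuotientAddGroup.mk'_surjective _ y
      rw [eι, e₁, e₂]
      exact ⟨rfl, map_zero (Hmk dI (k+1))⟩


end
end

section
/- Let (E^•, I_•, ∫) be a Cheeger–Simons model over 𝕂 and let S = (F^•, E^•, I^•) be its associated general spark complex. For every k ≥ 0, the map GS : Diff^k(CS) → Ĥ^k(S) defined by f ↦ [(T, ω̃, c)] — where T ∈ F^k is any lift with (q∘T)|_{Z_k(I_•)} = f and δT = ω̃ − c with ω ∈ E^{k+1}, c ∈ I^{k+1} — is a well-defined group isomorphism. -/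
open AddSubgroup

noncomputable section

theorem aux_lift {M A B : Type*} [AddCommGroup M] [Module.Free ℤ M] [AddCommGroup A]
    [AddCommGroup B] (g : A →+ B) (hg : Function.Surjective g) (f : M →+ B) :
    ∃ h : M →+ A, ∀ x, g (h x) = f x := by
  obtain ⟨h, hh⟩ := Module.projective_lifting_property g.toIntLinearMap f.toIntLinearMap hg
  exact ⟨h.toAddMonoidHom, fun x => DFunLike.congr_fun hh x⟩

theorem aux_section {M A : Type*} [AddCommGroup M] [Module.Free ℤ M] [AddCommGroup A]
    (N : AddSubgroup M) (g : A →+ N) (hg : Function.Surjective g) :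
    ∃ σ : N →+ A, ∀ n, g (σ n) = n := by
  let Q := CharacterModule A → AddCircle (1 : ℚ)
  let ι : A →+ Q := AddMonoidHom.mk' (fun a c => c a) (fun a b => funext fun c => map_add c a b)
  have hι : Function.Injective ι := by
    rw [injective_iff_map_eq_zero]
    intro a ha
    exact CharacterModule.eq_zero_of_character_apply fun c => congrFun ha c
  let K : AddSubgroup Q := g.ker.map ι
  let h0 : A →+ Q ⧸ K := (QuotientAddGroup.mk' K).comp ι
  let e := QuotientAddGroup.quotientKerEquivOfSurjective g hg
  let h1 : A ⧸ g.ker →+ Q ⧸ K := QuotientAddGroup.lift g.ker h0 (by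
    intro a ha
    exact (QuotientAddGroup.eq_zero_iff _).2 ⟨a, ha, rfl⟩)
  let h : N →+ Q ⧸ K := h1.comp e.symm.toAddMonoidHom
  have hh : ∀ a, h (g a) = QuotientAddGroup.mk' K (ι a) := by
    intro a
    have : e.symm (g a) = (a : A ⧸ g.ker) := by
      rw [AddEquiv.symm_apply_eq]; rfl
    change h1 (e.symm (g a)) = _
    rw [this]; rfl
  letI : DivisibleBy (Q ⧸ K) ℤ :=
    (QuotientAddGroup.mk'_surjective K).divisibleBy _ (fun a n => map_zsmul _ n a)
  obtain ⟨h2, hh2⟩ := (Module.Baer.of_divisible (Q ⧸ K)).extension_property_addMonoidHom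
    N.subtype N.subtype_injective h
  obtain ⟨H, hH⟩ := aux_lift (QuotientAddGroup.mk' K) (QuotientAddGroup.mk'_surjective K) h2
  have key : ∀ n : N, ∃ a, ι a = H n ∧ g a = n := by
    intro n
    obtain ⟨a, rfl⟩ := hg n
    have h3 : QuotientAddGroup.mk' K (H (g a)) = QuotientAddGroup.mk' K (ι a) := by
      rw [hH, ← hh, ← hh2]; rfl
    obtain ⟨b, hb, hb'⟩ := QuotientAddGroup.eq.1 h3.symm
    refine ⟨a + b, ?_, ?_⟩
    · rw [map_add, hb']; simp
    · have : g b = 0 := hb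
      rw [map_add, this, add_zero]
  choose s hs1 hs2 using key
  refine ⟨AddMonoidHom.mk' s ?_, hs2⟩
  intro x y
  apply hι
  simp [hs1]

theorem aux_retract {I : ℕ → Type*} [∀ i, AddCommGroup (I i)] [∀ i, Module.Free ℤ (I i)]
    (bd : ∀ k, I (k+1) →+ I k) : ∀ k, ∃ p : I k →+ Zc bd k, ∀ z : Zc bd k, p z = z
  | 0 => ⟨AddMonoidHom.mk' (fun x => ⟨x, mem_top x⟩) (fun _ _ => rfl), fun _ => rfl⟩
  | n+1 => by
    obtain ⟨σ, hσ⟩ := aux_section (bd n).range (bd n).rangeRestrict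
      (bd n).rangeRestrict_surjective
    have hσ' : ∀ y, bd n (σ y) = y := fun y => congrArg Subtype.val (hσ y)
    refine ⟨AddMonoidHom.mk' (fun x => ⟨x - σ ((bd n).rangeRestrict x), ?_⟩) ?_, ?_⟩
    · change bd n _ = 0
      rw [map_sub, hσ']; simp
    · intro x y
      ext
      simp only [map_add, AddSubgroup.coe_add]
      abel
    · rintro ⟨z, hz⟩
      have hz' : (bd n).rangeRestrict z = 0 := Subtype.ext hz
      ext
      change z - σ ((bd n).rangeRestrict z) = z
      rw [hz']; simp

theorem aux_factor {𝕂 : Type*} [Field 𝕂] [CharZero 𝕂] {I : ℕ → Type*}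
    [∀ i, AddCommGroup (I i)] (bd : ∀ k, I (k+1) →+ I k) :
    ∀ k (h : I k →+ 𝕂), (∀ z ∈ Zc bd k, h z = 0) → h ∈ Bc (codiff bd 𝕂) k
  | 0, h, hz => by
    change h = 0
    ext x
    exact hz x (mem_top x)
  | n+1, h, hz => by
    let e := QuotientAddGroup.quotientKerEquivRange (bd n)
    let h1 : (bd n).range →+ 𝕂 := (QuotientAddGroup.lift (bd n).ker h hz).comp
      e.symm.toAddMonoidHom
    letI : DivisibleBy 𝕂 ℤ := 
      { div := fun a n => a / n
        div_zero := fun a => by simp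
        div_cancel := fun {n} a hn => by
          have : (n : 𝕂) ≠ 0 := by exact_mod_cast hn
          simp only [zsmul_eq_mul]; field_simp }
    obtain ⟨b, hb⟩ := (Module.Baer.of_divisible 𝕂).extension_property_addMonoidHom
      (bd n).range.subtype (bd n).range.subtype_injective h1
    refine ⟨b, ?_⟩
    ext x
    change b (bd n x) = h x
    have h2 : b (bd n x) = h1 ((bd n).rangeRestrict x) := by rw [← hb]; rfl
    rw [h2]
    have : e.symm ((bd n).rangeRestrict x) = (x : I (n+1) ⧸ (bd n).ker) := by
      rw [AddEquiv.symm_apply_eq]; rfl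
    change QuotientAddGroup.lift (bd n).ker h hz (e.symm ((bd n).rangeRestrict x)) = _
    rw [this]; rfl

theorem aux_Bc {𝕂 : Type*} [Field 𝕂] {I : ℕ → Type*}
    [∀ i, AddCommGroup (I i)] (bd : ∀ k, I (k+1) →+ I k) :
    ∀ k (h : I k →+ 𝕂), h ∈ Bc (codiff bd 𝕂) k → ∀ z ∈ Zc bd k, h z = 0
  | 0, h, hh, z, _ => by
    have : h = 0 := hh
    simp [this]
  | n+1, h, hh, z, hz => by
    obtain ⟨b, rfl⟩ := hh
    change b (bd n z) = 0
    have : bd n z = 0 := hz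
    rw [this, map_zero]

theorem aux_q {𝕂 : Type*} [Field 𝕂] (x : 𝕂) : qZ 𝕂 x = 0 ↔ ∃ n : ℤ, (n : 𝕂) = x := by
  rw [show qZ 𝕂 x = ((x : 𝕂) : KmodZ 𝕂) from rfl, QuotientAddGroup.eq_zero_iff]
  simp [intSub, AddSubgroup.mem_zmultiples_iff]

theorem aux_int {𝕂 : Type*} [Field 𝕂] [CharZero 𝕂] {A : Type*} [AddCommGroup A] (h : A →+ 𝕂)
    (hh : ∀ x, qZ 𝕂 (h x) = 0) : ∃ c : A →+ ℤ, ∀ x, (c x : 𝕂) = h x := by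
  choose c hc using fun x => (aux_q _).1 (hh x)
  refine ⟨AddMonoidHom.mk' c ?_, hc⟩
  intro x y
  have : ((c (x + y) : ℤ) : 𝕂) = ((c x + c y : ℤ) : 𝕂) := by push_cast; simp [hc]
  exact_mod_cast this

/-- For a Cheeger–Simons model `(E^•, I_•, ∫)` with associated general
spark complex `𝒮 = (F^•, E^•, I^•)` (where `F^k = Hom(I_k, 𝕂)`, `I^k = Hom(I_k, ℤ)`,
`Ψ = Φ` is the inclusion and `E^•` is embedded via `ω ↦ ω̃`), the map
`GS : Diff^k(𝒞𝒮) → Ĥ^k(𝒮)`, `f ↦ [(T, ω̃, c)]` — where `T` is any lift of `f` and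
`δT = ω̃ - c` — is a well-defined group isomorphism. -/
theorem statement9
    {𝕂 : Type*} [Field 𝕂] [CharZero 𝕂]
    (I E : ℕ → Type*)
    [∀ i, AddCommGroup (I i)] [∀ i, Module.Free ℤ (I i)]
    [∀ i, AddCommGroup (E i)] [∀ i, Module 𝕂 (E i)]
    (bd : ∀ k, I (k+1) →+ I k)
    (hbd : ∀ k x, bd k (bd (k+1) x) = 0)
    (d : ∀ k, E k →+ E (k+1))
    (hd : ∀ k x, d (k+1) (d k x) = 0)
    (hdsmul : ∀ (k : ℕ) (c : 𝕂) (e : E k), d k (c • e) = c • d k e)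
    (pair : ∀ k, E k →+ (I k →+ 𝕂))
    (pair_smul : ∀ (k : ℕ) (c : 𝕂) (e : E k) (x : I k), pair k (c • e) x = c * pair k e x)
    (pair_injE : ∀ k, Function.Injective (pair k))
    (pair_injI : ∀ (k : ℕ) (x y : I k), (∀ e : E k, pair k e x = pair k e y) → x = y)
    (int_triv : ∀ (k : ℕ) (e : E k), (∀ β : I k, pair k e β ∈ intSub 𝕂) → e = 0)
    (stokes : ∀ (k : ℕ) (e : E k) (α : I (k+1)), pair k e (bd k α) = pair (k+1) (d k e) α)
    (deRham_inj : ∀ (k : ℕ) (e : E k), d k e = 0 → pair k e ∈ Bc (codiff bd 𝕂) k → e ∈ Bc d k)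
    (deRham_surj : ∀ (k : ℕ) (h : I k →+ 𝕂), codiff bd 𝕂 k h = 0 →
      ∃ e : E k, d k e = 0 ∧ h - pair k e ∈ Bc (codiff bd 𝕂) k)
    (k : ℕ) :
    ∃ GS : ↥(DiffChar bd hbd pair k) →+
        SparkH (codiff bd 𝕂) (codiff bd ℤ) (PhiMap 𝕂) pair k,
      (∀ f : ↥(DiffChar bd hbd pair k),
          ∃ (T : I k →+ 𝕂) (ω : E (k+1)) (c : I (k+1) →+ ℤ),
            (∀ x : ↥(Zc bd k), qZ 𝕂 (T x) = (f : ↥(Zc bd k) →+ KmodZ 𝕂) x) ∧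
            codiff bd 𝕂 k T = pair (k+1) ω - PhiMap 𝕂 (k+1) c) ∧
      (∀ (f : ↥(DiffChar bd hbd pair k)) (T : I k →+ 𝕂) (ω : E (k+1))
          (c : I (k+1) →+ ℤ),
          (∀ x : ↥(Zc bd k), qZ 𝕂 (T x) = (f : ↥(Zc bd k) →+ KmodZ 𝕂) x) →
          codiff bd 𝕂 k T = pair (k+1) ω - PhiMap 𝕂 (k+1) c →
          ∃ hsp : ((T, ω, c) : (I k →+ 𝕂) × E (k+1) × (I (k+1) →+ ℤ)) ∈
              Sparks (codiff bd 𝕂) (codiff bd ℤ) (PhiMap 𝕂) pair k,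
            GS f = sparkMk (codiff bd 𝕂) (codiff bd ℤ) (PhiMap 𝕂) pair k
              ⟨(T, ω, c), hsp⟩) ∧
      Function.Bijective GS := by
  have hqint : ∀ n : ℤ, qZ 𝕂 (n : 𝕂) = 0 := fun n => (aux_q _).2 ⟨n, rfl⟩
  have hcl : ∀ (T : I k →+ 𝕂) (ω : E (k+1)) (c : I (k+1) →+ ℤ),
      codiff bd 𝕂 k T = pair (k+1) ω - PhiMap 𝕂 (k+1) c → codiff bd ℤ (k+1) c = 0 := by
    intro T ω c h
    have h1 : ∀ β, T (bd k β) = pair (k+1) ω β - (c β : 𝕂) := fun β => DFunLike.congr_fun h β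
    have h2 : ∀ x, pair (k+2) (d (k+1) ω) x = (c (bd (k+1) x) : 𝕂) := by
      intro x
      rw [← stokes]
      have := h1 (bd (k+1) x)
      rw [hbd, map_zero] at this
      exact (sub_eq_zero.1 this.symm)
    have h3 : d (k+1) ω = 0 := int_triv _ _ fun β => by
      rw [h2]
      exact (QuotientAddGroup.eq_zero_iff _).1 (hqint _)
    ext x
    have := h2 x
    rw [h3] at this
    simp only [map_zero, AddMonoidHom.zero_apply] at this
    change c (bd (k+1) x) = 0
    exact_mod_cast this.symm
  let R : ↥(Sparks (codiff bd 𝕂) (codiff bd ℤ) (PhiMap 𝕂) pair k) →+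
      ↥(DiffChar bd hbd pair k) := AddMonoidHom.mk'
    (fun p => ⟨((qZ 𝕂).comp p.1.1).comp (Zc bd k).subtype, p.1.2.1, fun β => by
      have h1 : p.1.1 (bd k β) = pair (k+1) p.1.2.1 β - (p.1.2.2 β : 𝕂) :=
        DFunLike.congr_fun p.2.1 β
      change qZ 𝕂 (p.1.1 (bd k β)) = _
      rw [h1, map_sub, hqint, sub_zero]⟩)
    (fun p p' => by
      ext x
      change qZ 𝕂 (p.1.1 x + p'.1.1 x) = qZ 𝕂 (p.1.1 x) + qZ 𝕂 (p'.1.1 x)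
      rw [map_add])
  have hR : ∀ p x, (R p : ↥(Zc bd k) →+ KmodZ 𝕂) x = qZ 𝕂 (p.1.1 x) := fun _ _ => rfl
  obtain ⟨pr, hpr⟩ := aux_retract bd k
  have hex : ∀ f : ↥(DiffChar bd hbd pair k),
          ∃ (T : I k →+ 𝕂) (ω : E (k+1)) (c : I (k+1) →+ ℤ),
            (∀ x : ↥(Zc bd k), qZ 𝕂 (T x) = (f : ↥(Zc bd k) →+ KmodZ 𝕂) x) ∧
            codiff bd 𝕂 k T = pair (k+1) ω - PhiMap 𝕂 (k+1) c := by
    rintro ⟨f, ω, hf⟩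
    obtain ⟨T, hT⟩ := aux_lift (qZ 𝕂) (QuotientAddGroup.mk'_surjective _) (f.comp pr)
    have hT' : ∀ x : ↥(Zc bd k), qZ 𝕂 (T x) = f x := by
      intro x
      rw [hT, AddMonoidHom.comp_apply, hpr]
    obtain ⟨c, hc⟩ := aux_int (pair (k+1) ω - codiff bd 𝕂 k T) (by
      intro β
      change qZ 𝕂 (pair (k+1) ω β - T (bd k β)) = 0
      rw [map_sub, ← hf, hT' ⟨bd k β, mem_Zc_bd bd hbd k β⟩, sub_self])
    refine ⟨T, ω, c, hT', ?_⟩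
    have : PhiMap 𝕂 (k+1) c = pair (k+1) ω - codiff bd 𝕂 k T := by
      ext x; exact hc x
    rw [this]; abel
  have hsurj : Function.Surjective R := by
    intro f
    obtain ⟨T, ω, c, h1, h2⟩ := hex f
    refine ⟨⟨(T, ω, c), h2, hcl T ω c h2⟩, ?_⟩
    ext x
    exact h1 x
  have hker : R.ker = SparkRel (codiff bd 𝕂) (codiff bd ℤ) (PhiMap 𝕂) pair k := by
    ext ⟨⟨T, ω, c⟩, h1, h2⟩
    simp only at h1 h2
    constructor
    · intro h
      have h3 : ∀ z : Zc bd k, qZ 𝕂 (T z) = 0 := fun z => by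
        have h4 : R ⟨(T, ω, c), h1, h2⟩ = 0 := h
        have := hR ⟨(T, ω, c), h1, h2⟩ z
        rw [h4] at this
        exact this.symm
      obtain ⟨s0, hs0⟩ := aux_int (T.comp (Zc bd k).subtype) h3
      let s : I k →+ ℤ := s0.comp pr
      have hs : ∀ z : Zc bd k, (s z : 𝕂) = T z := fun z => by
        change (s0 (pr z) : 𝕂) = _
        rw [hpr, hs0]; rfl
      have h5 : ∀ β, (s (bd k β) : 𝕂) = pair (k+1) ω β - (c β : 𝕂) := fun β => by
        rw [hs ⟨bd k β, mem_Zc_bd bd hbd k β⟩]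
        exact DFunLike.congr_fun h1 β
      have h6 : ω = 0 := int_triv _ _ fun β => by
        have : pair (k+1) ω β = ((s (bd k β) + c β : ℤ) : 𝕂) := by
          push_cast; rw [h5]; ring
        rw [this]
        exact (QuotientAddGroup.eq_zero_iff _).1 (hqint _)
      refine ⟨s, ?_, ?_⟩
      · apply aux_factor
        intro z hz
        change T z - (s z : 𝕂) = 0
        rw [hs ⟨z, hz⟩, sub_self]
      · ext β
        change c β = - s (bd k β)
        have := h5 β
        rw [h6, map_zero, AddMonoidHom.zero_apply, zero_sub] at this
        have h7 : s (bd k β) = - c β := by exact_mod_cast this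
        rw [h7, neg_neg]
    · rintro ⟨s, hs1, hs2⟩
      change R _ = 0
      ext z
      have h3 : T z - (s z : 𝕂) = 0 := aux_Bc bd k _ hs1 z z.2
      rw [hR]
      change qZ 𝕂 (T z) = 0
      rw [sub_eq_zero.1 h3, hqint]
  let e1 := QuotientAddGroup.quotientKerEquivOfSurjective R hsurj
  let e2 := QuotientAddGroup.quotientAddEquivOfEq hker
  let GS := e1.symm.trans e2
  have hGS : ∀ p, GS (R p) = sparkMk (codiff bd 𝕂) (codiff bd ℤ) (PhiMap 𝕂) pair k p := by
    intro p
    have : e1.symm (R p) = (p : _ ⧸ R.ker) := by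
      rw [AddEquiv.symm_apply_eq]; rfl
    change e2 (e1.symm (R p)) = _
    rw [this]; rfl
  refine ⟨GS.toAddMonoidHom, hex, ?_, GS.bijective⟩
  intro f T ω c h1 h2
  refine ⟨⟨h2, hcl T ω c h2⟩, ?_⟩
  rw [← hGS]
  change GS f = GS _
  congr 1
  ext x
  exact (h1 x).symm

end
end

section
/- Let S = (F^•, E^•, I^•) be a general spark complex and k ≥ 0. The map δ₂ : Ĥ^k(S) → H^{k+1}(I^•), [(a, e, r)] ↦ [r], is a well-defined surjective group homomorphism; hence with Ĥ^k_E(S) := ker δ₂ there is a short exact sequence 0 → Ĥ^k_E(S) → Ĥ^k(S) → H^{k+1}(I^•) → 0. -/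
open AddSubgroup

noncomputable section

/-- The map `δ₂ : Ĥ^k(𝒮) → H^{k+1}(I^•)`, `[(a, e, r)] ↦ [r]`, is a
well-defined surjective group homomorphism; hence with `Ĥ^k_E(𝒮) := ker δ₂` there is a
short exact sequence `0 → Ĥ^k_E(𝒮) → Ĥ^k(𝒮) → H^{k+1}(I^•) → 0`. -/
theorem statement11
    (F E Ic : ℕ → Type*)
    [∀ i, AddCommGroup (F i)] [∀ i, AddCommGroup (E i)] [∀ i, AddCommGroup (Ic i)]
    (dF : ∀ k, F k →+ F (k+1)) (hdF : ∀ k x, dF (k+1) (dF k x) = 0)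
    (dE : ∀ k, E k →+ E (k+1)) (hdE : ∀ k x, dE (k+1) (dE k x) = 0)
    (dI : ∀ k, Ic k →+ Ic (k+1)) (hdI : ∀ k x, dI (k+1) (dI k x) = 0)
    (Ψ : ∀ k, Ic k →+ F k) (hΨ : ∀ k x, Ψ (k+1) (dI k x) = dF k (Ψ k x))
    (j : ∀ k, E k →+ F k) (hj : ∀ k x, j (k+1) (dE k x) = dF k (j k x))
    (hjinj : ∀ k, Function.Injective (j k))
    (hiso_inj : ∀ (k : ℕ) (e : E k), dE k e = 0 → j k e ∈ Bc dF k → e ∈ Bc dE k)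
    (hiso_surj : ∀ (k : ℕ) (a : F k), dF k a = 0 →
      ∃ e : E k, dE k e = 0 ∧ a - j k e ∈ Bc dF k)
    (k : ℕ) :
    ∃ δ₂ : SparkH dF dI Ψ j k →+ Hc dI (k+1),
      (∀ (p : ↥(Sparks dF dI Ψ j k))
          (hr : (p : F k × E (k+1) × Ic (k+1)).2.2 ∈ (dI (k+1)).ker),
          δ₂ (sparkMk dF dI Ψ j k p)
            = Hmk dI (k+1) ⟨(p : F k × E (k+1) × Ic (k+1)).2.2, hr⟩) ∧
      Function.Surjective δ₂ := by
  let f : ↥(Sparks dF dI Ψ j k) →+ ↥(dI (k+1)).ker :=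
    { toFun := fun p => ⟨(p : F k × E (k+1) × Ic (k+1)).2.2, p.2.2⟩
      map_zero' := rfl
      map_add' := fun _ _ => rfl }
  have hker : SparkRel dF dI Ψ j k ≤ ((Hmk dI (k+1)).comp f).ker := by
    rintro p ⟨s, _, hs⟩
    rw [AddMonoidHom.mem_ker]
    refine (QuotientAddGroup.eq_zero_iff (f p)).2 ?_
    rw [AddSubgroup.mem_addSubgroupOf]
    refine ⟨-s, ?_⟩
    rw [map_neg]
    exact hs.symm
  refine ⟨QuotientAddGroup.lift _ ((Hmk dI (k+1)).comp f) hker, fun p hr => rfl, ?_⟩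
  intro y
  obtain ⟨⟨r, hr⟩, rfl⟩ := QuotientAddGroup.mk'_surjective _ y
  have hr' : dI (k+1) r = 0 := hr
  obtain ⟨e, _, a, ha⟩ := hiso_surj (k+1) (Ψ (k+1) r) (by rw [← hΨ, hr', map_zero])
  refine ⟨sparkMk dF dI Ψ j k ⟨(-a, e, r), ?_, hr'⟩, rfl⟩
  simp [ha]

end
end

section
/- Let S = (F^•, E^•, I^•) be a general spark complex and k ≥ 0. There is a short exact sequence of abelian groups 0 → H^k(E^•)/H^k_I(E^•) → Ĥ^k_E(S) → dE^k → 0, where dE^k ⊆ E^{k+1} is the group of exact elements of degree k+1 of E^•, the surjection sends a spark class [(a, e, r)] with [r] = 0 in H^{k+1}(I^•) to its middle component e (which is then necessarily exact in E^•), and the first map sends the class of a d-closed α ∈ E^k to the spark class [(α, 0, 0)]. -/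
open AddSubgroup

noncomputable section

/-- With `δ₂ : Ĥ^k(𝒮) → H^{k+1}(I^•)`, `[(a, e, r)] ↦ [r]`, and
`Ĥ^k_E(𝒮) := ker δ₂`, there is a short exact sequence
`0 → H^k(E^•)/H^k_I(E^•) → Ĥ^k_E(𝒮) → dE^k → 0`,
where the surjection sends a spark class `[(a, e, r)]` with `[r] = 0` to its (necessarily
exact) middle component `e`, and the first map sends the class of a closed `α ∈ E^k` to
the spark class `[(α, 0, 0)]`. -/
theorem statement12
    (F E Ic : ℕ → Type*)
    [∀ i, AddCommGroup (F i)] [∀ i, AddCommGroup (E i)] [∀ i, AddCommGroup (Ic i)]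
    (dF : ∀ k, F k →+ F (k+1)) (hdF : ∀ k x, dF (k+1) (dF k x) = 0)
    (dE : ∀ k, E k →+ E (k+1)) (hdE : ∀ k x, dE (k+1) (dE k x) = 0)
    (dI : ∀ k, Ic k →+ Ic (k+1)) (hdI : ∀ k x, dI (k+1) (dI k x) = 0)
    (Ψ : ∀ k, Ic k →+ F k) (hΨ : ∀ k x, Ψ (k+1) (dI k x) = dF k (Ψ k x))
    (j : ∀ k, E k →+ F k) (hj : ∀ k x, j (k+1) (dE k x) = dF k (j k x))
    (hjinj : ∀ k, Function.Injective (j k))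
    (hiso_inj : ∀ (k : ℕ) (e : E k), dE k e = 0 → j k e ∈ Bc dF k → e ∈ Bc dE k)
    (hiso_surj : ∀ (k : ℕ) (a : F k), dF k a = 0 →
      ∃ e : E k, dE k e = 0 ∧ a - j k e ∈ Bc dF k)
    (k : ℕ) :
    ∃ (δ₂ : SparkH dF dI Ψ j k →+ Hc dI (k+1)),
      (∀ (p : ↥(Sparks dF dI Ψ j k))
          (hr : (p : F k × E (k+1) × Ic (k+1)).2.2 ∈ (dI (k+1)).ker),
          δ₂ (sparkMk dF dI Ψ j k p)
            = Hmk dI (k+1) ⟨(p : F k × E (k+1) × Ic (k+1)).2.2, hr⟩) ∧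
      ∃ (ι : Hc dE k →+ ↥δ₂.ker) (ε : ↥δ₂.ker →+ E (k+1)),
        (∀ (α : E k) (hα : α ∈ (dE k).ker),
            ∃ (hsp : ((j k α, 0, 0) : F k × E (k+1) × Ic (k+1)) ∈ Sparks dF dI Ψ j k)
              (hker : sparkMk dF dI Ψ j k ⟨(j k α, 0, 0), hsp⟩ ∈ δ₂.ker),
              ι (Hmk dE k ⟨α, hα⟩) = ⟨sparkMk dF dI Ψ j k ⟨(j k α, 0, 0), hsp⟩, hker⟩) ∧
        (∀ (α : E k) (hα : α ∈ (dE k).ker),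
            ι (Hmk dE k ⟨α, hα⟩) = 0 ↔
              ∃ u : Ic k, dI k u = 0 ∧ j k α - Ψ k u ∈ Bc dF k) ∧
        (∀ (p : ↥(Sparks dF dI Ψ j k)) (h : sparkMk dF dI Ψ j k p ∈ δ₂.ker),
            ε ⟨sparkMk dF dI Ψ j k p, h⟩ = (p : F k × E (k+1) × Ic (k+1)).2.1) ∧
        (∀ e : E (k+1), (∃ x, ε x = e) ↔ e ∈ Bc dE (k+1)) ∧
        (∀ x, ε x = 0 ↔ x ∈ ι.range) := by
  have hB : ∀ (k : ℕ) (x : F k), x ∈ Bc dF k → dF k x = 0 := by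
    intro k x hx
    cases k with
    | zero =>
      have hx0 : x = 0 := by simpa [Bc] using hx
      rw [hx0, map_zero]
    | succ n =>
      obtain ⟨y, rfl⟩ := hx
      exact hdF n y
  have hjB : ∀ (k : ℕ) (x : E k), x ∈ Bc dE k → j k x ∈ Bc dF k := by
    intro k x hx
    cases k with
    | zero =>
      have hx0 : x = 0 := by simpa [Bc] using hx
      rw [hx0, map_zero]
      exact zero_mem _
    | succ n =>
      obtain ⟨y, rfl⟩ := hx
      exact ⟨j n y, (hj n y).symm⟩
  have mk0 : ∀ p : ↥(Sparks dF dI Ψ j k), sparkMk dF dI Ψ j k p = 0 ↔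
      ∃ s : Ic k, (p : F k × E (k+1) × Ic (k+1)).1 - Ψ k s ∈ Bc dF k ∧
        (p : F k × E (k+1) × Ic (k+1)).2.2 = -(dI k s) :=
    fun p => QuotientAddGroup.eq_zero_iff p
  have hmk0 : ∀ p : ↥(dI (k+1)).ker, Hmk dI (k+1) p = 0 ↔ ∃ t, dI k t = (p : Ic (k+1)) :=
    fun p => (QuotientAddGroup.eq_zero_iff p).trans AddSubgroup.mem_addSubgroupOf
  let R : ↥(Sparks dF dI Ψ j k) →+ ↥(dI (k+1)).ker :=
    { toFun := fun p => ⟨(p : F k × E (k+1) × Ic (k+1)).2.2, p.2.2⟩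
      map_zero' := rfl
      map_add' := fun _ _ => rfl }
  let δ₂ : SparkH dF dI Ψ j k →+ Hc dI (k+1) :=
    QuotientAddGroup.lift (SparkRel dF dI Ψ j k) ((Hmk dI (k+1)).comp R) (by
      rintro p ⟨s, -, h2⟩
      refine (hmk0 (R p)).2 ⟨-s, ?_⟩
      rw [map_neg]
      exact h2.symm)
  have hδ : ∀ p, δ₂ (sparkMk dF dI Ψ j k p) = Hmk dI (k+1) (R p) := fun _ => rfl
  let M : ↥(Sparks dF dI Ψ j k) →+ E (k+1) :=
    { toFun := fun p => (p : F k × E (k+1) × Ic (k+1)).2.1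
      map_zero' := rfl
      map_add' := fun _ _ => rfl }
  let ε₀ : SparkH dF dI Ψ j k →+ E (k+1) :=
    QuotientAddGroup.lift (SparkRel dF dI Ψ j k) M (by
      rintro ⟨⟨a, e, r⟩, h1, h2⟩ ⟨s, h3, h4⟩
      change e = 0
      simp only at h1 h2 h3 h4
      apply hjinj
      have h5 := hB _ _ h3
      rw [map_sub, h1, h4, map_neg, hΨ] at h5
      rw [map_zero, ← h5]
      abel)
  have hε₀ : ∀ p, ε₀ (sparkMk dF dI Ψ j k p) = (p : F k × E (k+1) × Ic (k+1)).2.1 :=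
    fun _ => rfl
  have hsp : ∀ α ∈ (dE k).ker,
      ((j k α, 0, 0) : F k × E (k+1) × Ic (k+1)) ∈ Sparks dF dI Ψ j k := by
    intro α hα
    refine ⟨?_, by simp⟩
    have hα' : dE k α = 0 := hα
    simp [← hj, hα']
  let A : ↥(dE k).ker →+ ↥(Sparks dF dI Ψ j k) :=
    { toFun := fun α => ⟨(j k α, 0, 0), hsp α α.2⟩
      map_zero' := by ext <;> simp
      map_add' := by intro x y; ext <;> simp }
  have hker : ∀ α, sparkMk dF dI Ψ j k (A α) ∈ δ₂.ker := by
    intro α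
    refine (hδ _).trans ((hmk0 _).2 ⟨0, ?_⟩)
    rw [map_zero]
    rfl
  let ι : Hc dE k →+ ↥δ₂.ker :=
    QuotientAddGroup.lift _ (((sparkMk dF dI Ψ j k).comp A).codRestrict δ₂.ker hker) (by
      intro α hα
      apply Subtype.ext
      refine (mk0 (A α)).2 ⟨0, ?_, ?_⟩
      · rw [map_zero, sub_zero]
        exact hjB _ _ hα
      · rw [map_zero, neg_zero]
        rfl)
  have hι : ∀ α, ι (Hmk dE k α) = ⟨sparkMk dF dI Ψ j k (A α), hker α⟩ := fun _ => rfl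
  have hrep : ∀ x : ↥δ₂.ker, ∃ p, ∃ h : sparkMk dF dI Ψ j k p ∈ δ₂.ker, x = ⟨_, h⟩ := by
    rintro ⟨x, hx⟩
    obtain ⟨p, rfl⟩ := QuotientAddGroup.mk'_surjective _ x
    exact ⟨p, hx, rfl⟩
  refine ⟨δ₂, fun p hr => rfl, ι, ε₀.comp δ₂.ker.subtype, fun α hα => ⟨hsp α hα, hker ⟨α, hα⟩, rfl⟩,
    ?_, fun p h => rfl, ?_, ?_⟩
  · intro α hα
    rw [hι]
    refine (Subtype.ext_iff.trans (mk0 (A ⟨α, hα⟩))).trans ?_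
    constructor
    · rintro ⟨s, h1, h2⟩
      exact ⟨s, neg_eq_zero.1 h2.symm, h1⟩
    · rintro ⟨s, h1, h2⟩
      refine ⟨s, h2, ?_⟩
      rw [h1, neg_zero]
      rfl
  · intro e
    constructor
    · rintro ⟨x, rfl⟩
      obtain ⟨⟨⟨a, e, r⟩, h1, h2⟩, h, rfl⟩ := hrep x
      change e ∈ Bc dE (k+1)
      obtain ⟨t, ht⟩ := (hmk0 _).1 ((hδ _).symm.trans h)
      change dI k t = r at ht
      simp only at h1 h2
      have h3 : j (k+1) e = dF k (a + Ψ k t) := by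
        rw [map_add, h1, ← ht, hΨ]
        abel
      refine hiso_inj _ _ ?_ ⟨_, h3.symm⟩
      apply hjinj
      rw [hj, h3, hdF, map_zero]
    · rintro ⟨x, rfl⟩
      have hs : ((j k x, dE k x, 0) : F k × E (k+1) × Ic (k+1)) ∈ Sparks dF dI Ψ j k := by
        refine ⟨?_, by simp⟩
        simp [hj]
      refine ⟨⟨sparkMk dF dI Ψ j k ⟨_, hs⟩, (hδ _).trans ((hmk0 _).2 ⟨0, ?_⟩)⟩, rfl⟩
      rw [map_zero]
      rfl
  · intro x
    constructor
    · intro hx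
      obtain ⟨⟨⟨a, e, r⟩, h1, h2⟩, h, rfl⟩ := hrep x
      change e = 0 at hx
      subst hx
      obtain ⟨t, ht⟩ := (hmk0 _).1 ((hδ _).symm.trans h)
      change dI k t = r at ht
      subst ht
      simp only at h1 h2
      obtain ⟨α, hα, hb⟩ := hiso_surj k (a + Ψ k t) (by
        rw [map_add, h1, hΨ, map_zero]
        abel)
      refine ⟨Hmk dE k ⟨α, hα⟩, ?_⟩
      rw [hι]
      apply Subtype.ext
      symm
      rw [← sub_eq_zero]
      change sparkMk dF dI Ψ j k _ - sparkMk dF dI Ψ j k _ = 0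
      rw [← map_sub, mk0]
      refine ⟨-t, ?_, ?_⟩
      · change a - j k α - Ψ k (-t) ∈ _
        convert hb using 1
        rw [map_neg]
        abel
      · change dI k t - 0 = _
        simp
    · rintro ⟨y, rfl⟩
      obtain ⟨α, rfl⟩ := QuotientAddGroup.mk'_surjective _ y
      rfl


end
end

section
/- Let S = (F^•, E^•, I^•) be a general spark complex and k ≥ 0, and let G be the mapping cone complex of Ψ : I^• → F^•, so that H^k(G) is the group of pairs (a, r) ∈ F^k ⊕ I^{k+1} with dr = 0 and da = −Ψ(r), modulo pairs of the form (db + Ψ(s), −ds) with (b, s) ∈ F^{k−1} ⊕ I^k. Then there is a short exact sequence 0 → H^k(G) → Ĥ^k(S) → Z^{k+1}_I(E^•) → 0, where the first map sends the class of (a, r) to the spark class [(a, 0, r)], and the second map is δ₁([(a, e, r)]) = e. -/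
open AddSubgroup

noncomputable section

section Cone

variable {F E Ic : ℕ → Type*}
  [∀ i, AddCommGroup (F i)] [∀ i, AddCommGroup (E i)] [∀ i, AddCommGroup (Ic i)]

/-- Degree-`k` cocycles of the mapping cone of `Ψ : I^• → F^•`: pairs
`(a, r) ∈ F^k ⊕ I^{k+1}` with `dr = 0` and `da = -Ψ(r)`. -/
def Cone (dF : ∀ k, F k →+ F (k+1)) (dI : ∀ k, Ic k →+ Ic (k+1))
    (Ψ : ∀ k, Ic k →+ F k) (k : ℕ) : AddSubgroup (F k × Ic (k+1)) where
  carrier := {p | dI (k+1) p.2 = 0 ∧ dF k p.1 = -(Ψ (k+1) p.2)}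
  add_mem' := by
    rintro p q ⟨h1, h2⟩ ⟨h1', h2'⟩
    refine ⟨?_, ?_⟩ <;> simp [Prod.fst_add, Prod.snd_add, h1, h1', h2, h2'] <;> abel
  zero_mem' := by simp
  neg_mem' := by
    rintro p ⟨h1, h2⟩
    refine ⟨?_, ?_⟩ <;> simp [Prod.fst_neg, Prod.snd_neg, h1, h2]

/-- Degree-`k` coboundaries of the mapping cone of `Ψ : I^• → F^•`: the subgroup of
cone cocycles of the form `(db + Ψ(s), -ds)` with `(b, s) ∈ F^{k-1} ⊕ I^k`. -/
def ConeRel (dF : ∀ k, F k →+ F (k+1)) (dI : ∀ k, Ic k →+ Ic (k+1))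
    (Ψ : ∀ k, Ic k →+ F k) (k : ℕ) : AddSubgroup ↥(Cone dF dI Ψ k) where
  carrier := {p | ∃ s : Ic k,
      (p : F k × Ic (k+1)).1 - Ψ k s ∈ Bc dF k ∧
      (p : F k × Ic (k+1)).2 = -(dI k s)}
  add_mem' := by
    rintro p q ⟨s, hs1, hs2⟩ ⟨t, ht1, ht2⟩
    refine ⟨s + t, ?_, ?_⟩
    · have := add_mem hs1 ht1
      simpa [Prod.fst_add, map_add, add_sub_add_comm] using this
    · simp [Prod.snd_add, hs2, ht2]
      abel
  zero_mem' := ⟨0, by simp [zero_mem], by simp⟩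
  neg_mem' := by
    rintro p ⟨s, hs1, hs2⟩
    refine ⟨-s, ?_, ?_⟩
    · have := neg_mem hs1
      simpa [Prod.fst_neg, map_neg, neg_sub, sub_eq_add_neg, add_comm] using this
    · simp [Prod.snd_neg, hs2]

/-- The degree-`k` cohomology `H^k(G)` of the mapping cone `G` of `Ψ : I^• → F^•`. -/
abbrev ConeH (dF : ∀ k, F k →+ F (k+1)) (dI : ∀ k, Ic k →+ Ic (k+1))
    (Ψ : ∀ k, Ic k →+ F k) (k : ℕ) :=
  ↥(Cone dF dI Ψ k) ⧸ ConeRel dF dI Ψ k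

/-- The class in `H^k(G)` of a cocycle of the mapping cone. -/
def coneMk (dF : ∀ k, F k →+ F (k+1)) (dI : ∀ k, Ic k →+ Ic (k+1))
    (Ψ : ∀ k, Ic k →+ F k) (k : ℕ) : ↥(Cone dF dI Ψ k) →+ ConeH dF dI Ψ k :=
  QuotientAddGroup.mk' _

end Cone

/-- With `G` the mapping cone of `Ψ : I^• → F^•`, there is a short
exact sequence `0 → H^k(G) → Ĥ^k(𝒮) → Z^{k+1}_I(E^•) → 0`, where the first map sends the
class of `(a, r)` to the spark class `[(a, 0, r)]` and the second map is
`δ₁([(a, e, r)]) = e`. -/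
theorem statement13
    (F E Ic : ℕ → Type*)
    [∀ i, AddCommGroup (F i)] [∀ i, AddCommGroup (E i)] [∀ i, AddCommGroup (Ic i)]
    (dF : ∀ k, F k →+ F (k+1)) (hdF : ∀ k x, dF (k+1) (dF k x) = 0)
    (dE : ∀ k, E k →+ E (k+1)) (hdE : ∀ k x, dE (k+1) (dE k x) = 0)
    (dI : ∀ k, Ic k →+ Ic (k+1)) (hdI : ∀ k x, dI (k+1) (dI k x) = 0)
    (Ψ : ∀ k, Ic k →+ F k) (hΨ : ∀ k x, Ψ (k+1) (dI k x) = dF k (Ψ k x))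
    (j : ∀ k, E k →+ F k) (hj : ∀ k x, j (k+1) (dE k x) = dF k (j k x))
    (hjinj : ∀ k, Function.Injective (j k))
    (hiso_inj : ∀ (k : ℕ) (e : E k), dE k e = 0 → j k e ∈ Bc dF k → e ∈ Bc dE k)
    (hiso_surj : ∀ (k : ℕ) (a : F k), dF k a = 0 →
      ∃ e : E k, dE k e = 0 ∧ a - j k e ∈ Bc dF k)
    (k : ℕ) :
    ∃ (ι : ConeH dF dI Ψ k →+ SparkH dF dI Ψ j k)
      (δ₁ : SparkH dF dI Ψ j k →+ E (k+1)),
      (∀ p : ↥(Cone dF dI Ψ k),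
          ∃ hsp : (((p : F k × Ic (k+1)).1, 0, (p : F k × Ic (k+1)).2) :
              F k × E (k+1) × Ic (k+1)) ∈ Sparks dF dI Ψ j k,
            ι (coneMk dF dI Ψ k p) = sparkMk dF dI Ψ j k
              ⟨((p : F k × Ic (k+1)).1, 0, (p : F k × Ic (k+1)).2), hsp⟩) ∧
      Function.Injective ι ∧
      (∀ p : ↥(Sparks dF dI Ψ j k),
          δ₁ (sparkMk dF dI Ψ j k p) = (p : F k × E (k+1) × Ic (k+1)).2.1) ∧
      (∀ e : E (k+1), (∃ x, δ₁ x = e) ↔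
          (dE (k+1) e = 0 ∧ ∃ u : Ic (k+1), dI (k+1) u = 0 ∧
            j (k+1) e - Ψ (k+1) u ∈ Bc dF (k+1))) ∧
      (∀ x, δ₁ x = 0 ↔ x ∈ ι.range) := by
  have hB : ∀ (k : ℕ) (x : F k), x ∈ Bc dF k → dF k x = 0 := by
    intro k x hx
    cases k with
    | zero =>
      have : x = 0 := by simpa [Bc] using hx
      simp [this]
    | succ n =>
      obtain ⟨y, rfl⟩ := hx
      exact hdF n y
  have hmem : ∀ p : ↥(Cone dF dI Ψ k),
      (((p : F k × Ic (k+1)).1, 0, (p : F k × Ic (k+1)).2) :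
              F k × E (k+1) × Ic (k+1)) ∈ Sparks dF dI Ψ j k := by
    rintro ⟨⟨a, r⟩, h1, h2⟩
    refine ⟨?_, h1⟩
    simpa using h2
  let f : ↥(Cone dF dI Ψ k) →+ ↥(Sparks dF dI Ψ j k) :=
    { toFun := fun p => ⟨_, hmem p⟩
      map_zero' := by ext <;> simp
      map_add' := by intro p q; ext <;> simp }
  let g : ↥(Sparks dF dI Ψ j k) →+ E (k+1) :=
    { toFun := fun p => (p : F k × E (k+1) × Ic (k+1)).2.1
      map_zero' := by simp
      map_add' := by intro p q; simp }
  have hf : ConeRel dF dI Ψ k ≤ (SparkRel dF dI Ψ j k).comap f := by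
    rintro p ⟨s, h1, h2⟩
    exact ⟨s, h1, h2⟩
  have hg : SparkRel dF dI Ψ j k ≤ g.ker := by
    rintro ⟨⟨a, e, r⟩, h1, h2⟩ ⟨s, h3, h4⟩
    change e = 0
    dsimp only at h1 h2 h3 h4
    apply hjinj (k+1)
    have h5 := hB k _ h3
    rw [map_sub, h1, h4, map_neg, hΨ] at h5
    rw [map_zero]
    simpa using h5
  refine ⟨QuotientAddGroup.map _ _ f hf, QuotientAddGroup.lift _ g hg, ?_, ?_, ?_, ?_, ?_⟩
  · intro p
    exact ⟨hmem p, rfl⟩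
  · rw [injective_iff_map_eq_zero]
    intro x
    induction x using QuotientAddGroup.induction_on with
    | H p =>
      intro h
      have h' : ((f p : ↥(Sparks dF dI Ψ j k)) : SparkH dF dI Ψ j k) = 0 := h
      rw [QuotientAddGroup.eq_zero_iff] at h' ⊢
      obtain ⟨s, h1, h2⟩ := h'
      exact ⟨s, h1, h2⟩
  · intro p
    rfl
  · intro e
    constructor
    · rintro ⟨x, hx⟩
      induction x using QuotientAddGroup.induction_on with
      | H p =>
        obtain ⟨⟨a, e', r⟩, h1, h2⟩ := p
        have hx' : e' = e := hx
        subst hx'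
        dsimp only at h1 h2
        refine ⟨?_, r, h2, a, h1⟩
        apply hjinj
        have h3 := hdF k a
        rw [h1, map_sub, ← hΨ, h2, map_zero, sub_zero] at h3
        rw [hj, h3, map_zero]
    · rintro ⟨-, u, hu, a, ha⟩
      exact ⟨sparkMk dF dI Ψ j k ⟨(a, e, u), ha, hu⟩, rfl⟩
  · intro x
    constructor
    · intro hx
      induction x using QuotientAddGroup.induction_on with
      | H p =>
        obtain ⟨⟨a, e, r⟩, h1, h2⟩ := p
        have hx' : e = 0 := hx
        subst hx'
        refine ⟨coneMk dF dI Ψ k ⟨(a, r), h2, ?_⟩, rfl⟩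
        simpa using h1
    · rintro ⟨y, rfl⟩
      induction y using QuotientAddGroup.induction_on with
      | H p => rfl

end
end

section
/- Let S = (F^•, E^•, I^•) be a general spark complex and k ≥ 0, and let G be the mapping cone complex of Ψ : I^• → F^•, so that H^k(G) is the group of pairs (a, r) ∈ F^k ⊕ I^{k+1} with dr = 0 and da = −Ψ(r), modulo pairs of the form (db + Ψ(s), −ds). Then there is a short exact sequence 0 → H^k(E^•)/H^k_I(E^•) → H^k(G) → Ker^{k+1}(I^•) → 0, where Ker^{k+1}(I^•) = ker(Ψ_* : H^{k+1}(I^•) → H^{k+1}(F^•)), the surjection sends the class of (a, r) to [r], and the first map sends the class of a d-closed α ∈ E^k (viewed in F^k) to the class of (α, 0). -/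
open AddSubgroup

noncomputable section

/-- With `G` the mapping cone of `Ψ : I^• → F^•` and
`Ker^{k+1}(I^•) = ker (Ψ_* : H^{k+1}(I^•) → H^{k+1}(F^•))`, there is a short exact
sequence `0 → H^k(E^•)/H^k_I(E^•) → H^k(G) → Ker^{k+1}(I^•) → 0`, where the surjection
sends the class of `(a, r)` to `[r]` and the first map sends the class of a `d`-closed
`α ∈ E^k` (viewed in `F^k`) to the class of `(α, 0)`. -/
theorem statement14
    (F E Ic : ℕ → Type*)
    [∀ i, AddCommGroup (F i)] [∀ i, AddCommGroup (E i)] [∀ i, AddCommGroup (Ic i)]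
    (dF : ∀ k, F k →+ F (k+1)) (hdF : ∀ k x, dF (k+1) (dF k x) = 0)
    (dE : ∀ k, E k →+ E (k+1)) (hdE : ∀ k x, dE (k+1) (dE k x) = 0)
    (dI : ∀ k, Ic k →+ Ic (k+1)) (hdI : ∀ k x, dI (k+1) (dI k x) = 0)
    (Ψ : ∀ k, Ic k →+ F k) (hΨ : ∀ k x, Ψ (k+1) (dI k x) = dF k (Ψ k x))
    (j : ∀ k, E k →+ F k) (hj : ∀ k x, j (k+1) (dE k x) = dF k (j k x))
    (hjinj : ∀ k, Function.Injective (j k))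
    (hiso_inj : ∀ (k : ℕ) (e : E k), dE k e = 0 → j k e ∈ Bc dF k → e ∈ Bc dE k)
    (hiso_surj : ∀ (k : ℕ) (a : F k), dF k a = 0 →
      ∃ e : E k, dE k e = 0 ∧ a - j k e ∈ Bc dF k)
    (k : ℕ) :
    ∃ (ι : Hc dE k →+ ConeH dF dI Ψ k)
      (π : ConeH dF dI Ψ k →+ Hc dI (k+1)),
      (∀ (α : E k) (hα : α ∈ (dE k).ker),
          ∃ hc : ((j k α, 0) : F k × Ic (k+1)) ∈ Cone dF dI Ψ k,
            ι (Hmk dE k ⟨α, hα⟩) = coneMk dF dI Ψ k ⟨(j k α, 0), hc⟩) ∧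
      (∀ (α : E k) (hα : α ∈ (dE k).ker),
          ι (Hmk dE k ⟨α, hα⟩) = 0 ↔
            ∃ u : Ic k, dI k u = 0 ∧ j k α - Ψ k u ∈ Bc dF k) ∧
      (∀ (p : ↥(Cone dF dI Ψ k)) (hr : (p : F k × Ic (k+1)).2 ∈ (dI (k+1)).ker),
          π (coneMk dF dI Ψ k p) = Hmk dI (k+1) ⟨(p : F k × Ic (k+1)).2, hr⟩) ∧
      (∀ x, π x = 0 ↔ x ∈ ι.range) ∧
      (∀ (u : Ic (k+1)) (hu : u ∈ (dI (k+1)).ker),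
          (∃ x, π x = Hmk dI (k+1) ⟨u, hu⟩) ↔ Ψ (k+1) u ∈ Bc dF (k+1)) := by
  have bdj : ∀ (n : ℕ) (e : E n), e ∈ Bc dE n → j n e ∈ Bc dF n := by
    intro n e he
    cases n with
    | zero =>
      have h0 : e = 0 := he
      rw [h0, map_zero]
      exact zero_mem _
    | succ n =>
      obtain ⟨b, rfl⟩ := he
      exact ⟨j n b, (hj n b).symm⟩
  have bcl : ∀ (n : ℕ) (a : F n), a ∈ Bc dF n → dF n a = 0 := by
    intro n a ha
    cases n with
    | zero =>
      have h0 : a = 0 := ha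
      rw [h0, map_zero]
    | succ n =>
      obtain ⟨b, rfl⟩ := ha
      exact hdF n b
  have hcone : ∀ α : E k, α ∈ (dE k).ker →
      ((j k α, 0) : F k × Ic (k+1)) ∈ Cone dF dI Ψ k := by
    intro α hα
    have hα' : dE k α = 0 := hα
    refine ⟨map_zero _, ?_⟩
    change dF k (j k α) = -(Ψ (k+1) 0)
    rw [← hj, hα', map_zero, map_zero, neg_zero]
  let f : ↥(dE k).ker →+ ↥(Cone dF dI Ψ k) :=
    { toFun := fun α => ⟨(j k α.1, 0), hcone α.1 α.2⟩
      map_zero' := by ext <;> simp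
      map_add' := by intro x y; ext <;> simp }
  let g : ↥(Cone dF dI Ψ k) →+ ↥(dI (k+1)).ker :=
    { toFun := fun p => ⟨p.1.2, p.2.1⟩
      map_zero' := rfl
      map_add' := fun _ _ => rfl }
  have hf : (Bc dE k).addSubgroupOf (dE k).ker ≤ (ConeRel dF dI Ψ k).comap f := by
    intro α hα
    have hα' : α.1 ∈ Bc dE k := hα
    refine ⟨0, ?_, ?_⟩
    · change j k α.1 - Ψ k 0 ∈ Bc dF k
      rw [map_zero, sub_zero]
      exact bdj k _ hα'
    · change (0 : Ic (k+1)) = -(dI k 0)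
      rw [map_zero, neg_zero]
  have hg : ConeRel dF dI Ψ k ≤ ((Bc dI (k+1)).addSubgroupOf (dI (k+1)).ker).comap g := by
    rintro p ⟨s, _, hs⟩
    change p.1.2 ∈ (dI k).range
    exact ⟨-s, by rw [map_neg, hs]⟩
  have coneZ : ∀ p : ↥(Cone dF dI Ψ k),
      coneMk dF dI Ψ k p = 0 ↔ p ∈ ConeRel dF dI Ψ k := fun p =>
    QuotientAddGroup.eq_zero_iff p
  have hZ : ∀ p : ↥(dI (k+1)).ker, Hmk dI (k+1) p = 0 ↔ p.1 ∈ (dI k).range := fun p =>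
    QuotientAddGroup.eq_zero_iff p
  have coneS : Function.Surjective (coneMk dF dI Ψ k) := QuotientAddGroup.mk'_surjective _
  have hS : Function.Surjective (Hmk dE k) := QuotientAddGroup.mk'_surjective _
  obtain ⟨ι, hι⟩ : ∃ ι : Hc dE k →+ ConeH dF dI Ψ k,
      ∀ α, ι (Hmk dE k α) = coneMk dF dI Ψ k (f α) :=
    ⟨QuotientAddGroup.map _ _ f hf, fun _ => rfl⟩
  obtain ⟨π, hπ⟩ : ∃ π : ConeH dF dI Ψ k →+ Hc dI (k+1),
      ∀ p, π (coneMk dF dI Ψ k p) = Hmk dI (k+1) (g p) :=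
    ⟨QuotientAddGroup.map _ _ g hg, fun _ => rfl⟩
  refine ⟨ι, π, fun α hα => ⟨hcone α hα, hι _⟩, ?_, fun p hr => hπ p, ?_, ?_⟩
  · intro α hα
    rw [hι, coneZ]
    constructor
    · rintro ⟨s, h1, h2⟩
      have h2' : (0 : Ic (k+1)) = -(dI k s) := h2
      exact ⟨s, neg_eq_zero.mp h2'.symm, h1⟩
    · rintro ⟨s, h1, h2⟩
      refine ⟨s, h2, ?_⟩
      change (0 : Ic (k+1)) = -(dI k s)
      rw [h1, neg_zero]
  · intro x
    obtain ⟨p, rfl⟩ := coneS x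
    constructor
    · rw [hπ, hZ]
      rintro ⟨s, hs⟩
      have hs' : dI k s = p.1.2 := hs
      have hp : dF k p.1.1 = -(Ψ (k+1) p.1.2) := p.2.2
      obtain ⟨e, he, hb⟩ := hiso_surj k (p.1.1 + Ψ k s) (by
        rw [map_add, ← hΨ, hs', hp, neg_add_cancel])
      refine ⟨Hmk dE k ⟨e, he⟩, ?_⟩
      rw [hι, ← sub_eq_zero, ← map_sub, coneZ]
      refine ⟨s, ?_, ?_⟩
      · change j k e - p.1.1 - Ψ k s ∈ Bc dF k
        have := neg_mem hb
        convert this using 1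
        abel
      · change 0 - p.1.2 = -(dI k s)
        rw [hs', zero_sub]
    · rintro ⟨y, hy⟩
      obtain ⟨α, rfl⟩ := hS y
      rw [← hy, hι, hπ, hZ]
      exact zero_mem _
  · intro u hu
    constructor
    · rintro ⟨x, hx⟩
      obtain ⟨p, rfl⟩ := coneS x
      rw [hπ, ← sub_eq_zero, ← map_sub, hZ] at hx
      obtain ⟨s, hs⟩ := hx
      have hs' : dI k s = p.1.2 - u := hs
      have hp : dF k p.1.1 = -(Ψ (k+1) p.1.2) := p.2.2
      refine ⟨-p.1.1 - Ψ k s, ?_⟩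
      rw [map_sub, map_neg, ← hΨ, hs', hp, map_sub]
      abel
    · rintro ⟨b, hb⟩
      have hc : ((-b, u) : F k × Ic (k+1)) ∈ Cone dF dI Ψ k := by
        refine ⟨hu, ?_⟩
        change dF k (-b) = -(Ψ (k+1) u)
        rw [map_neg, hb]
      exact ⟨coneMk dF dI Ψ k ⟨(-b, u), hc⟩, hπ _⟩

end
end
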